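/- arXiv:1609.08342 — 4 statements merged into one kernel-verified Lean document; each statement's English description precedes it below -/
import Mathlib

section
/- For every m>0 one has Λ(m) ≤ 4(1+m)²(2+4m+m²)^{3/2} / (√2 · π · (m(m+2))³). In particular Λ(m) is finite for every m>0 and Λ(m) → 0 as m → ∞. -/
open MeasureTheory Real Filter Topology
open scoped InnerProductSpace ENNReal

noncomputable section

/-- Three-dimensional Euclidean space. -/
abbrev R3 := EuclideanSpace ℝ (Fin 3)

/-- The kernel `G(q₁,…,q_N)` (here with `N` arguments indexed by `Fin N`). -/
def Gker (m μ : ℝ) {N : ℕ} (q : Fin N → R3) : ℝ :=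
  (∑ i, ‖q i‖ ^ 2 + (2 / (m + 1)) * ∑ i, ∑ j ∈ Finset.Ioi i, ⟪q i, q j⟫_ℝ + μ)⁻¹

/-- The function `L(q₁,…,q_{N-1})` (here with `N` arguments indexed by `Fin N`). -/
def Lker (m μ : ℝ) {N : ℕ} (q : Fin N → R3) : ℝ :=
  2 * π ^ 2 * Real.sqrt ((m * (m + 2) / (m + 1) ^ 2) * ∑ i, ‖q i‖ ^ 2
    + (2 * m / (m + 1) ^ 2) * ∑ i, ∑ j ∈ Finset.Ioi i, ⟪q i, q j⟫_ℝ + μ)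

/-- `ℓ_m(s,K,Q)`. -/
def ellm (m : ℝ) (s K : R3) (Q : ℝ) : ℝ :=
  Real.sqrt (m / (m + 1) ^ 2 * ‖s + K‖ ^ 2 + m / (m + 1) * (‖s‖ ^ 2 + Q ^ 2))

/-- The quantity `D(s,t,K,Q)`. -/
def Dker (m : ℝ) (s t K : R3) (Q : ℝ) : ℝ :=
  |⟪s + (2 + m)⁻¹ • K, t + (2 + m)⁻¹ • K⟫_ℝ| /
    ((‖s + (2 + m)⁻¹ • K‖ ^ 2 + ‖t + (2 + m)⁻¹ • K‖ ^ 2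
        + m / (1 + m) * (Q ^ 2 + (2 + m)⁻¹ * ‖K‖ ^ 2)) ^ 2
      - ((2 / (1 + m)) * ⟪s + (2 + m)⁻¹ • K, t + (2 + m)⁻¹ • K⟫_ℝ) ^ 2)

/-- `Λ(m)`, as a supremum in the extended nonnegative reals. -/
def Lam (m : ℝ) : ℝ≥0∞ :=
  ⨆ (s : R3) (K : R3) (Q : ℝ) (_ : 0 < Q),
    ENNReal.ofReal ((‖s‖ ^ 2 + Q ^ 2) / (π ^ 2 * (1 + m)) / Real.sqrt (ellm m s K Q)) *
      ∫⁻ t : R3, ENNReal.ofReal (Dker m s t K Q / (‖t‖ ^ 2 * Real.sqrt (ellm m t K Q)))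

/-!
Let `A = 1 / (2 + m)`, `x = s + A K`, `y = t + A K`. Completing the square gives
`ℓ_m(s)² = c |x|² + M`, where `c = 1 - (1 + m)⁻²` and `M` does not depend on `s`. With
`X = |x|² + |y|² + M`, the denominator of `D` is at least `c X²` for the same `c`. The three bounds
`2 |x| |y| ≤ X`, `√c |x| ≤ ℓ_m(s)` and `√c |y| ≤ ℓ_m(t)` multiply to
`√(2c) |x| |y| ≤ X^(1/2) ℓ_m(s)^(1/2) ℓ_m(t)^(1/2)`, which absorbs both weights `ℓ_m^(-1/2)` and
bounds the integrand by a multiple of `|t|⁻² (a + |t + A K|²)^(-3/2)` with `a = |x|² + M`. By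
rearrangement the translation by `A K` can only decrease the integral of this function, which is
`4π / a` without it. The factor `|s|² + Q²` in front is at most `(1 + m) a / m` because
`(m / (m + 1)) (|s|² + Q²) ≤ ℓ_m(s)² ≤ a`, so `a` cancels.
-/

section Rearrangement

theorem mul_add_mul_le_of_canonicallyOrderedAdd {R : Type*} [CommSemiring R] [PartialOrder R]
    [CanonicallyOrderedAdd R] {a b c d : R} (hab : a ≤ b) (hcd : c ≤ d) :
    a * d + b * c ≤ a * c + b * d := by
  obtain ⟨e, rfl⟩ := exists_add_of_le hab
  calc a * d + (a + e) * c = a * c + a * d + e * c := by ring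
    _ ≤ a * c + a * d + e * d := by gcongr
    _ = a * c + (a + e) * d := by ring

theorem mul_add_mul_le_of_monovary {ι R : Type*} [CommSemiring R] [LinearOrder R]
    [CanonicallyOrderedAdd R] {f g : ι → R} (hfg : Monovary f g) (i j : ι) :
    f i * g j + f j * g i ≤ f i * g i + f j * g j := by
  rcases lt_trichotomy (g i) (g j) with h | h | h
  · exact mul_add_mul_le_of_canonicallyOrderedAdd (hfg h) h.le
  · simp only [h, le_refl]
  · rw [add_comm, add_comm (f i * g i)]
    exact mul_add_mul_le_of_canonicallyOrderedAdd (hfg h) h.le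

theorem lintegral_mul_add_right_le_of_monovary {G : Type*} [AddCommGroup G] [MeasurableSpace G]
    [MeasurableAdd G] [MeasurableNeg G] (μ : Measure G) [μ.IsAddLeftInvariant] [μ.IsNegInvariant]
    {f g : G → ℝ≥0∞} (hf : Measurable f) (hg : Measurable g) (hf_even : f.Even) (hg_even : g.Even)
    (hfg : Monovary f g) (v : G) :
    ∫⁻ t, f t * g (t + v) ∂μ ≤ ∫⁻ t, f t * g t ∂μ := by
  have hswap : ∫⁻ t, f (t + v) * g t ∂μ = ∫⁻ t, f t * g (t + v) ∂μ := by
    rw [← lintegral_sub_left_eq_self _ (-v)]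
    refine lintegral_congr fun t ↦ ?_
    rw [show -v - t + v = -t by abel, show -v - t = -(t + v) by abel, hf_even, hg_even]
  have hsum : ∫⁻ t, f t * g (t + v) + f (t + v) * g t ∂μ ≤
      ∫⁻ t, f t * g t + f (t + v) * g (t + v) ∂μ :=
    lintegral_mono fun t ↦ mul_add_mul_le_of_monovary hfg t (t + v)
  rw [lintegral_add_left (by fun_prop), lintegral_add_left (by fun_prop), hswap,
    lintegral_add_right_eq_self (fun t ↦ f t * g t) v, ← two_mul, ← two_mul] at hsum
  exact (ENNReal.mul_le_mul_iff_right two_ne_zero ENNReal.ofNat_ne_top).1 hsum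

end Rearrangement

section Radial

open Module Metric

variable {E : Type*} [NormedAddCommGroup E] [NormedSpace ℝ E] [FiniteDimensional ℝ E]
  [Nontrivial E] [MeasurableSpace E] [BorelSpace E] (μ : Measure E) [μ.IsAddHaarMeasure]

theorem lintegral_fun_norm_addHaar {f : ℝ → ℝ≥0∞} (hf : Measurable f) :
    ∫⁻ x, f ‖x‖ ∂μ = finrank ℝ E * μ (ball 0 1) *
      ∫⁻ r in Set.Ioi (0 : ℝ), ENNReal.ofReal (r ^ (finrank ℝ E - 1)) * f r := by
  calc ∫⁻ x, f ‖x‖ ∂μ = ∫⁻ x : ({0}ᶜ : Set E), f ‖x.1‖ ∂(μ.comap (↑)) := by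
        rw [lintegral_subtype_comap (measurableSet_singleton _).compl fun x ↦ f ‖x‖,
          restrict_compl_singleton]
    _ = ∫⁻ x, f x.2 ∂μ.toSphere.prod (.volumeIoiPow (finrank ℝ E - 1)) := by
        simpa using μ.measurePreserving_homeomorphUnitSphereProd.lintegral_comp
          (f := f ∘ Subtype.val ∘ Prod.snd) (by fun_prop)
    _ = μ.toSphere Set.univ * ∫⁻ r : Set.Ioi (0 : ℝ), f r ∂.volumeIoiPow (finrank ℝ E - 1) := by
        rw [lintegral_prod _ (by fun_prop)]
        dsimp only
        rw [lintegral_const, mul_comm]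
    _ = _ := by
        rw [μ.toSphere_apply_univ, Measure.volumeIoiPow,
          lintegral_withDensity_eq_lintegral_mul _ (by fun_prop) (by fun_prop),
          ← lintegral_subtype_comap measurableSet_Ioi]
        rfl

theorem lintegral_inv_enorm_pow_mul_fun_norm {g : ℝ → ℝ≥0∞} (hg : Measurable g) :
    ∫⁻ x, (‖x‖ₑ ^ (finrank ℝ E - 1))⁻¹ * g ‖x‖ ∂μ =
      finrank ℝ E * μ (ball 0 1) * ∫⁻ r in Set.Ioi (0 : ℝ), g r := by
  simp only [← ofReal_norm]
  rw [lintegral_fun_norm_addHaar μ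
    (f := fun r ↦ (ENNReal.ofReal r ^ (finrank ℝ E - 1))⁻¹ * g r) (by fun_prop)]
  congr 1
  refine setLIntegral_congr_fun measurableSet_Ioi fun r (hr : 0 < r) ↦ ?_
  rw [ENNReal.ofReal_pow hr.le, ENNReal.mul_inv_cancel_left (by simp [hr]) (by simp)]

theorem lintegral_inv_enorm_pow_mul_fun_norm_add_le {g : ℝ → ℝ≥0∞} (hg : Measurable g)
    (hg_anti : AntitoneOn g (Set.Ici 0)) (v : E) :
    ∫⁻ x, (‖x‖ₑ ^ (finrank ℝ E - 1))⁻¹ * g ‖x + v‖ ∂μ ≤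
      finrank ℝ E * μ (ball 0 1) * ∫⁻ r in Set.Ioi (0 : ℝ), g r := by
  have hpow_anti : Antitone fun r : ℝ ↦ (ENNReal.ofReal r ^ (finrank ℝ E - 1))⁻¹ :=
    fun _ _ h ↦ by dsimp only; gcongr
  have hmono : Monovary (fun x : E ↦ (‖x‖ₑ ^ (finrank ℝ E - 1))⁻¹) fun x ↦ g ‖x‖ := by
    simp only [← ofReal_norm]
    exact fun x y ↦ (hpow_anti.antitoneOn _).monovaryOn hg_anti (norm_nonneg x) (norm_nonneg y)
  rw [← lintegral_inv_enorm_pow_mul_fun_norm μ hg]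
  exact lintegral_mul_add_right_le_of_monovary μ (by fun_prop) (by fun_prop)
    (fun x ↦ by simp only [enorm_neg]) (fun x ↦ by simp only [norm_neg]) hmono v

end Radial

section RadialIntegral

variable {a : ℝ}

theorem antitoneOn_add_sq_rpow_of_nonpos (ha : 0 < a) {b : ℝ} (hb : b ≤ 0) :
    AntitoneOn (fun r ↦ (a + r ^ 2) ^ b) (Set.Ici 0) :=
  fun r (hr : 0 ≤ r) _ _ h ↦ Real.rpow_le_rpow_of_nonpos (by positivity) (by gcongr) hb

theorem hasDerivAt_mul_add_sq_rpow (ha : 0 < a) (r : ℝ) :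
    HasDerivAt (fun r ↦ r * (a + r ^ 2) ^ (-(1 / 2) : ℝ) / a) ((a + r ^ 2) ^ (-(3 / 2) : ℝ)) r := by
  have hpos : 0 < a + r ^ 2 := by positivity
  have hsq : HasDerivAt (fun r : ℝ ↦ a + r ^ 2) (2 * r) r := by
    simpa using (hasDerivAt_pow 2 r).const_add a
  have hpow : (a + r ^ 2) ^ (-(1 / 2) : ℝ) = (a + r ^ 2) * (a + r ^ 2) ^ (-(3 / 2) : ℝ) := by
    rw [← Real.rpow_one_add' hpos.le (by norm_num)]
    norm_num
  refine (((hasDerivAt_id r).mul (hsq.rpow_const (.inl hpos.ne'))).div_const a).congr_deriv ?_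
  rw [show (-(1 / 2) - 1 : ℝ) = -(3 / 2) by norm_num, hpow, id]
  field_simp
  ring

theorem tendsto_mul_add_sq_rpow_atTop (a : ℝ) :
    Tendsto (fun r : ℝ ↦ r * (a + r ^ 2) ^ (-(1 / 2) : ℝ)) atTop (𝓝 1) := by
  have hbase : Tendsto (fun r : ℝ ↦ a / r ^ 2 + 1) atTop (𝓝 1) := by
    simpa using (tendsto_const_nhds.div_atTop (tendsto_pow_atTop (α := ℝ) two_ne_zero)).add_const 1
  have hpow := hbase.rpow_const (p := (-(1 / 2) : ℝ)) (.inl one_ne_zero)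
  rw [Real.one_rpow] at hpow
  refine hpow.congr' ?_
  filter_upwards [eventually_gt_atTop 0, hbase.eventually_const_lt zero_lt_one] with r hr hpos
  have hfactor : a + r ^ 2 = (a / r ^ 2 + 1) * r ^ 2 := by field_simp
  have hr_pow : (r ^ 2) ^ (-(1 / 2) : ℝ) = r⁻¹ := by
    rw [← Real.rpow_natCast_mul hr.le, ← Real.rpow_neg_one]
    norm_num
  rw [hfactor, Real.mul_rpow hpos.le (by positivity), hr_pow]
  field_simp

theorem lintegral_Ioi_add_sq_rpow (ha : 0 < a) :
    ∫⁻ r in Set.Ioi (0 : ℝ), ENNReal.ofReal ((a + r ^ 2) ^ (-(3 / 2) : ℝ)) =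
      ENNReal.ofReal (1 / a) := by
  have hderiv : ∀ r ∈ Set.Ici (0 : ℝ), HasDerivAt (fun r ↦ r * (a + r ^ 2) ^ (-(1 / 2) : ℝ) / a)
      ((a + r ^ 2) ^ (-(3 / 2) : ℝ)) r := fun r _ ↦ hasDerivAt_mul_add_sq_rpow ha r
  have hnonneg : ∀ r : ℝ, 0 ≤ (a + r ^ 2) ^ (-(3 / 2) : ℝ) := fun r ↦ by positivity
  have hlim := (tendsto_mul_add_sq_rpow_atTop a).div_const a
  rw [← ofReal_integral_eq_lintegral_ofReal
      (integrableOn_Ioi_deriv_of_nonneg' hderiv (fun r _ ↦ hnonneg r) hlim) (.of_forall hnonneg),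
    integral_Ioi_of_hasDerivAt_of_nonneg' hderiv (fun r _ ↦ hnonneg r) hlim]
  simp

theorem lintegral_inv_enorm_sq_mul_rpow_norm_add_le (ha : 0 < a) (v : R3) :
    ∫⁻ t : R3, (‖t‖ₑ ^ 2)⁻¹ * ENNReal.ofReal ((a + ‖t + v‖ ^ 2) ^ (-(3 / 2) : ℝ)) ≤
      ENNReal.ofReal (4 * π / a) := by
  have hle := lintegral_inv_enorm_pow_mul_fun_norm_add_le (volume : Measure R3)
    (g := fun r ↦ ENNReal.ofReal ((a + r ^ 2) ^ (-(3 / 2) : ℝ))) (by fun_prop)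
    (ENNReal.ofReal_mono.comp_antitoneOn (antitoneOn_add_sq_rpow_of_nonpos ha (by norm_num))) v
  rw [lintegral_Ioi_add_sq_rpow ha, finrank_euclideanSpace_fin,
    EuclideanSpace.volume_ball_fin_three] at hle
  refine hle.trans_eq ?_
  rw [ENNReal.ofReal_one, one_pow, one_mul, ← ENNReal.ofReal_natCast,
    ← ENNReal.ofReal_mul (by positivity), ← ENNReal.ofReal_mul (by positivity)]
  congr 1
  push_cast
  ring

end RadialIntegral

section Kernel

theorem rpow_three_halves {x : ℝ} (hx : 0 ≤ x) : x ^ (3 / 2 : ℝ) = x * √x := by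
  rw [Real.sqrt_eq_rpow, ← Real.rpow_one_add' hx (by norm_num)]
  norm_num

theorem sqrt_two_mul_mul_mul_le {c M p q : ℝ} (hc : 0 ≤ c) (hM : 0 ≤ M) (hp : 0 ≤ p)
    (hq : 0 ≤ q) :
    √(2 * c) * (p * q) ≤ √(p ^ 2 + q ^ 2 + M) * (√√(c * p ^ 2 + M) * √√(c * q ^ 2 + M)) := by
  have hpq : 2 * (p * q) ≤ p ^ 2 + q ^ 2 + M := by nlinarith [sq_nonneg (p - q)]
  have hle_sqrt : ∀ r : ℝ, √c * r ≤ √(c * r ^ 2 + M) := fun r ↦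
    Real.le_sqrt_of_sq_le (by rw [mul_pow, Real.sq_sqrt hc]; linarith)
  rw [← Real.sqrt_mul (Real.sqrt_nonneg _), ← Real.sqrt_mul (by positivity)]
  refine Real.le_sqrt_of_sq_le ?_
  calc (√(2 * c) * (p * q)) ^ 2 = 2 * (p * q) * (√c * p * (√c * q)) := by
        rw [mul_pow, Real.sq_sqrt (by positivity)]
        linear_combination -2 * p ^ 2 * q ^ 2 * Real.sq_sqrt hc
    _ ≤ _ := by gcongr <;> exact hle_sqrt _

variable {F : Type*} [NormedAddCommGroup F] [InnerProductSpace ℝ F] {δ M : ℝ}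

theorem abs_inner_div_sq_sub_sq_le (hδ : δ ^ 2 < 1) (hM : 0 < M) (x y : F) :
    |⟪x, y⟫_ℝ| / ((‖x‖ ^ 2 + ‖y‖ ^ 2 + M) ^ 2 - (2 * δ * ⟪x, y⟫_ℝ) ^ 2) ≤
      ‖x‖ * ‖y‖ / ((1 - δ ^ 2) * (‖x‖ ^ 2 + ‖y‖ ^ 2 + M) ^ 2) := by
  have hinner := abs_real_inner_le_norm x y
  have htwo : |2 * ⟪x, y⟫_ℝ| ≤ ‖x‖ ^ 2 + ‖y‖ ^ 2 + M := by
    rw [abs_mul, abs_two]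
    nlinarith [sq_nonneg (‖x‖ - ‖y‖)]
  have hden : (1 - δ ^ 2) * (‖x‖ ^ 2 + ‖y‖ ^ 2 + M) ^ 2 ≤
      (‖x‖ ^ 2 + ‖y‖ ^ 2 + M) ^ 2 - (2 * δ * ⟪x, y⟫_ℝ) ^ 2 := by
    linarith [mul_le_mul_of_nonneg_left (sq_le_sq.2 (htwo.trans (le_abs_self _))) (sq_nonneg δ)]
  exact div_le_div₀ (by positivity) hinner (mul_pos (sub_pos.2 hδ) (by positivity)) hden

theorem abs_inner_div_sq_sub_sq_div_le (hδ : δ ^ 2 < 1) (hM : 0 < M) (x y : F) :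
    |⟪x, y⟫_ℝ| / ((‖x‖ ^ 2 + ‖y‖ ^ 2 + M) ^ 2 - (2 * δ * ⟪x, y⟫_ℝ) ^ 2) /
        (√√((1 - δ ^ 2) * ‖x‖ ^ 2 + M) * √√((1 - δ ^ 2) * ‖y‖ ^ 2 + M)) ≤
      (‖x‖ ^ 2 + ‖y‖ ^ 2 + M) ^ (-(3 / 2) : ℝ) / (√2 * (1 - δ ^ 2) ^ (3 / 2 : ℝ)) := by
  have hc : 0 < 1 - δ ^ 2 := sub_pos.2 hδ
  have hkernel := abs_inner_div_sq_sub_sq_le hδ hM x y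
  have hweight := sqrt_two_mul_mul_mul_le hc.le hM.le (norm_nonneg x) (norm_nonneg y)
  have hX : 0 < ‖x‖ ^ 2 + ‖y‖ ^ 2 + M := by positivity
  have hW : 0 < √√((1 - δ ^ 2) * ‖x‖ ^ 2 + M) * √√((1 - δ ^ 2) * ‖y‖ ^ 2 + M) := by positivity
  rw [Real.sqrt_mul zero_le_two] at hweight
  set c := 1 - δ ^ 2
  set X := ‖x‖ ^ 2 + ‖y‖ ^ 2 + M
  set W := √√(c * ‖x‖ ^ 2 + M) * √√(c * ‖y‖ ^ 2 + M)
  calc _ ≤ ‖x‖ * ‖y‖ / (c * X ^ 2) / W := by gcongr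
    _ = √2 * √c * (‖x‖ * ‖y‖) / (√2 * √c * c * X ^ 2 * W) := by field_simp
    _ ≤ √X * W / (√2 * √c * c * X ^ 2 * W) := by gcongr
    _ = _ := by
        rw [Real.rpow_neg hX.le, rpow_three_halves hX.le, rpow_three_halves hc.le]
        field_simp
        rw [Real.sq_sqrt hX.le]

end Kernel

section Lam

/-- The coefficient of `|s + A K|²` in `ℓ_m(s, K, Q)²`, where `A = (2 + m)⁻¹`. It equals
`m (m + 2) / (m + 1)²`, and is written so that `(1 + m)⁻¹` can play the role of `δ` in
`abs_inner_div_sq_sub_sq_le`. -/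
def kineticCoeff (m : ℝ) : ℝ := 1 - ((1 + m)⁻¹) ^ 2

/-- The part of `ℓ_m(s, K, Q)²` that does not depend on `s` once the square in `s` is completed. -/
def residualMass (m : ℝ) (K : R3) (Q : ℝ) : ℝ := m / (1 + m) * (Q ^ 2 + (2 + m)⁻¹ * ‖K‖ ^ 2)

/-- The `t`-independent part of `|s + A K|² + |t + A K|² + residualMass m K Q`, the quantity squared
in the denominator of `D`: the mass `a` in the majorant `(a + |t + A K|²)^(-3/2)`. -/
def centeredEnergy (m : ℝ) (s K : R3) (Q : ℝ) : ℝ :=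
  ‖s + (2 + m)⁻¹ • K‖ ^ 2 + residualMass m K Q

/-- The value `4 / (√2 π m c^(3/2))`, with `c = kineticCoeff m`, of the upper bound for `Λ(m)` given
by the rearrangement argument. -/
def lamBound (m : ℝ) : ℝ := 4 / (√2 * π * m * kineticCoeff m ^ (3 / 2 : ℝ))

variable {m Q : ℝ}

theorem inv_one_add_sq_lt_one (hm : 0 < m) : ((1 + m)⁻¹) ^ 2 < 1 :=
  pow_lt_one₀ (by positivity) (inv_lt_one_of_one_lt₀ (by linarith)) two_ne_zero

theorem kineticCoeff_pos (hm : 0 < m) : 0 < kineticCoeff m := sub_pos.2 (inv_one_add_sq_lt_one hm)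

theorem kineticCoeff_le_one (m : ℝ) : kineticCoeff m ≤ 1 := sub_le_self _ (sq_nonneg _)

theorem kineticCoeff_eq_div (hm : 0 < m) : kineticCoeff m = m * (m + 2) / (1 + m) ^ 2 := by
  rw [kineticCoeff]
  field_simp
  ring

theorem residualMass_pos (hm : 0 < m) (K : R3) (hQ : 0 < Q) : 0 < residualMass m K Q := by
  unfold residualMass
  positivity

theorem centeredEnergy_pos (hm : 0 < m) (s K : R3) (hQ : 0 < Q) : 0 < centeredEnergy m s K Q :=
  add_pos_of_nonneg_of_pos (sq_nonneg _) (residualMass_pos hm K hQ)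

theorem lamBound_pos (hm : 0 < m) : 0 < lamBound m := by
  have := kineticCoeff_pos hm
  unfold lamBound
  positivity

theorem ellm_eq_sqrt (hm : 0 < m) (s K : R3) (Q : ℝ) :
    ellm m s K Q = √(kineticCoeff m * ‖s + (2 + m)⁻¹ • K‖ ^ 2 + residualMass m K Q) := by
  rw [ellm, residualMass, kineticCoeff_eq_div hm]
  congr 1
  rw [norm_add_sq_real, norm_add_sq_real, inner_smul_right, norm_smul, Real.norm_eq_abs,
    abs_of_pos (by positivity), add_comm m 1, add_comm m 2]
  field_simp
  ring

theorem Dker_div_sqrt_ellm_le (hm : 0 < m) (s t K : R3) (hQ : 0 < Q) :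
    Dker m s t K Q / (√(ellm m s K Q) * √(ellm m t K Q)) ≤
      (centeredEnergy m s K Q + ‖t + (2 + m)⁻¹ • K‖ ^ 2) ^ (-(3 / 2) : ℝ) /
        (√2 * kineticCoeff m ^ (3 / 2 : ℝ)) := by
  rw [ellm_eq_sqrt hm, ellm_eq_sqrt hm, Dker, div_eq_mul_inv 2, centeredEnergy,
    add_right_comm _ (residualMass m K Q)]
  exact abs_inner_div_sq_sub_sq_div_le (inv_one_add_sq_lt_one hm) (residualMass_pos hm K hQ)
    (s + (2 + m)⁻¹ • K) (t + (2 + m)⁻¹ • K)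

theorem norm_sq_add_sq_div_le (hm : 0 < m) (s K : R3) (Q : ℝ) :
    (‖s‖ ^ 2 + Q ^ 2) / (1 + m) ≤ centeredEnergy m s K Q / m := by
  have hc := kineticCoeff_pos hm
  have hM : 0 ≤ residualMass m K Q := by
    unfold residualMass
    positivity
  rw [le_div_iff₀ hm]
  calc (‖s‖ ^ 2 + Q ^ 2) / (1 + m) * m = m / (m + 1) * (‖s‖ ^ 2 + Q ^ 2) := by ring
    _ ≤ ellm m s K Q ^ 2 := by
        rw [ellm, Real.sq_sqrt (by positivity)]
        exact le_add_of_nonneg_left (by positivity)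
    _ = kineticCoeff m * ‖s + (2 + m)⁻¹ • K‖ ^ 2 + residualMass m K Q := by
        rw [ellm_eq_sqrt hm, Real.sq_sqrt (by positivity)]
    _ ≤ centeredEnergy m s K Q := by
        unfold centeredEnergy
        gcongr
        exact mul_le_of_le_one_left (by positivity) (kineticCoeff_le_one m)

theorem weight_mul_Dker_le (hm : 0 < m) (s t K : R3) (hQ : 0 < Q) :
    (‖s‖ ^ 2 + Q ^ 2) / (π ^ 2 * (1 + m)) / √(ellm m s K Q) *
        (Dker m s t K Q / √(ellm m t K Q)) ≤
      centeredEnergy m s K Q * lamBound m / (4 * π) *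
        (centeredEnergy m s K Q + ‖t + (2 + m)⁻¹ • K‖ ^ 2) ^ (-(3 / 2) : ℝ) := by
  have ha := centeredEnergy_pos hm s K hQ
  have hc := kineticCoeff_pos hm
  calc _ = (‖s‖ ^ 2 + Q ^ 2) / (1 + m) / π ^ 2 *
        (Dker m s t K Q / (√(ellm m s K Q) * √(ellm m t K Q))) := by
        simp only [div_eq_mul_inv, mul_inv]
        ring
    _ ≤ centeredEnergy m s K Q / m / π ^ 2 *
        ((centeredEnergy m s K Q + ‖t + (2 + m)⁻¹ • K‖ ^ 2) ^ (-(3 / 2) : ℝ) /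
          (√2 * kineticCoeff m ^ (3 / 2 : ℝ))) := by
        refine mul_le_mul_of_nonneg ?_ (Dker_div_sqrt_ellm_le hm s t K hQ) (by positivity)
          (by positivity)
        exact div_le_div_of_nonneg_right (norm_sq_add_sq_div_le hm s K Q) (sq_nonneg π)
    _ = _ := by
        simp only [lamBound, div_eq_mul_inv, mul_inv]
        ring

theorem Lam_integrand_le (hm : 0 < m) (s t K : R3) (hQ : 0 < Q) :
    ENNReal.ofReal ((‖s‖ ^ 2 + Q ^ 2) / (π ^ 2 * (1 + m)) / √(ellm m s K Q)) *
        ENNReal.ofReal (Dker m s t K Q / (‖t‖ ^ 2 * √(ellm m t K Q))) ≤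
      ENNReal.ofReal (centeredEnergy m s K Q * lamBound m / (4 * π)) *
        ((‖t‖ₑ ^ 2)⁻¹ * ENNReal.ofReal
          ((centeredEnergy m s K Q + ‖t + (2 + m)⁻¹ • K‖ ^ 2) ^ (-(3 / 2) : ℝ))) := by
  have ha := centeredEnergy_pos hm s K hQ
  have hB := lamBound_pos hm
  have hinv : ENNReal.ofReal (‖t‖ ^ 2)⁻¹ ≤ (‖t‖ₑ ^ 2)⁻¹ := by
    rw [← ofReal_norm, ← ENNReal.ofReal_pow (norm_nonneg t)]
    exact ENNReal.ofReal_inv_le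
  rw [← ENNReal.ofReal_mul (by positivity), mul_left_comm, ← ENNReal.ofReal_mul (by positivity)]
  calc _ = ENNReal.ofReal ((‖t‖ ^ 2)⁻¹ * ((‖s‖ ^ 2 + Q ^ 2) / (π ^ 2 * (1 + m)) /
        √(ellm m s K Q) * (Dker m s t K Q / √(ellm m t K Q)))) := by
        congr 1
        ring
    _ ≤ _ := by
        rw [ENNReal.ofReal_mul (by positivity)]
        exact mul_le_mul' hinv (ENNReal.ofReal_le_ofReal (weight_mul_Dker_le hm s t K hQ))

theorem Lam_le_ofReal_lamBound (hm : 0 < m) : Lam m ≤ ENNReal.ofReal (lamBound m) := by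
  refine iSup_le fun s ↦ iSup_le fun K ↦ iSup_le fun Q ↦ iSup_le fun hQ ↦ ?_
  have ha := centeredEnergy_pos hm s K hQ
  have hB := lamBound_pos hm
  rw [← lintegral_const_mul' _ _ ENNReal.ofReal_ne_top]
  refine (lintegral_mono fun t ↦ Lam_integrand_le hm s t K hQ).trans ?_
  rw [lintegral_const_mul' _ _ ENNReal.ofReal_ne_top]
  grw [lintegral_inv_enorm_sq_mul_rpow_norm_add_le ha]
  rw [← ENNReal.ofReal_mul (by positivity)]
  refine (congrArg ENNReal.ofReal ?_).le
  field_simp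

theorem lamBound_le_explicit (hm : 0 < m) :
    lamBound m ≤ 4 * (1 + m) ^ 2 * (2 + 4 * m + m ^ 2) ^ (3 / 2 : ℝ) /
      (√2 * π * (m * (m + 2)) ^ 3) := by
  set h := m * (m + 2) with h_def
  set E := 2 + 4 * m + m ^ 2 with E_def
  have hh : 0 < h := by positivity
  have hE : h ≤ E := by linarith
  have hmE : (1 + m) / m * h ≤ E := by
    rw [h_def, E_def, div_mul_eq_mul_div, div_le_iff₀ hm]
    nlinarith
  have hsq : √h ^ 2 = h := Real.sq_sqrt hh.le
  rw [lamBound, kineticCoeff_eq_div hm, ← h_def, rpow_three_halves (by positivity),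
    rpow_three_halves (by positivity), Real.sqrt_div hh.le, Real.sqrt_sq (by positivity)]
  calc _ = 4 * (1 + m) ^ 2 * ((1 + m) / m * h * √h) / (√2 * π * h ^ 3) := by
        field_simp
        rw [hsq]
    _ ≤ 4 * (1 + m) ^ 2 * (E * √E) / (√2 * π * h ^ 3) := by gcongr

theorem tendsto_lamBound_atTop : Tendsto lamBound atTop (𝓝 0) := by
  have hcoeff : Tendsto kineticCoeff atTop (𝓝 1) := by
    have hinv := tendsto_inv_atTop_zero.comp (tendsto_atTop_add_const_left atTop (1 : ℝ) tendsto_id)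
    unfold kineticCoeff
    simpa using (hinv.pow 2).const_sub 1
  have hpow := hcoeff.rpow_const (p := 3 / 2) (.inl one_ne_zero)
  rw [Real.one_rpow] at hpow
  exact tendsto_const_nhds.div_atTop
    ((tendsto_id.const_mul_atTop (by positivity)).atTop_mul_pos one_pos hpow)

end Lam

/-- the explicit upper bound on `Λ(m)`; in particular `Λ(m)` is finite
for every `m > 0` and `Λ(m) → 0` as `m → ∞`. -/
theorem Lam_upper_bound :
    (∀ m : ℝ, 0 < m →
      Lam m ≤ ENNReal.ofReal (4 * (1 + m) ^ 2 * (2 + 4 * m + m ^ 2) ^ ((3 : ℝ) / 2)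
        / (Real.sqrt 2 * π * (m * (m + 2)) ^ 3))) ∧
    (∀ m : ℝ, 0 < m → Lam m ≠ ⊤) ∧
    Filter.Tendsto Lam Filter.atTop (nhds 0) := by
  have hlim : Tendsto (fun m ↦ ENNReal.ofReal (lamBound m)) atTop (𝓝 0) := by
    simpa using ENNReal.tendsto_ofReal tendsto_lamBound_atTop
  refine ⟨fun m hm ↦ (Lam_le_ofReal_lamBound hm).trans
      (ENNReal.ofReal_le_ofReal (lamBound_le_explicit hm)),
    fun m hm ↦ ne_top_of_le_ne_top ENNReal.ofReal_ne_top (Lam_le_ofReal_lamBound hm),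
    tendsto_of_tendsto_of_tendsto_of_le_of_le' tendsto_const_nhds hlim ?_ ?_⟩
  · exact .of_forall fun _ ↦ zero_le
  · filter_upwards [eventually_gt_atTop 0] with m hm using Lam_le_ofReal_lamBound hm
end
end

section
/- Fix m>0, μ>0, N≥2 and q₁,…,q_{N−1}∈ℝ³. Then lim_{K→∞} ∫_{{q_N∈ℝ³ : |q_N|<K}} ( G(q₁,…,q_{N−1},q_N) − 1/|q_N|² ) dq_N = −L(q₁,…,q_{N−1}). -/
open MeasureTheory Real Filter Topology
open scoped InnerProductSpace ENNReal

noncomputable section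

/-!
Completing the square in `q_N = t`, the denominator of `G` is `‖t + a‖² + c²` with
`a = (m + 1)⁻¹ ∑ qᵢ` and `L = 2π²c`. Write `1 / (‖t‖² + c²) = h t + 1 / ‖t‖²`. In dimension three
`h` is integrable, and polar coordinates give `∫ h = -2π²c`; being integrable, `h` may be
translated freely.

What is left is the effect of translating `1 / ‖t‖²`, that is, the difference of its integrals over
the balls of radius `K` about `a` and about `0`. Crude bounds only show that it is `O(1)`: the
integrand is of order `K⁻²` on a symmetric difference of volume of order `K²`. The two balls
have the same volume, however, so the constant `1 / K²` may be subtracted, and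
`1 / ‖t‖² - 1 / K² = O(K⁻³)` there.
-/

section Balls

open Metric Module
open scoped symmDiff

theorem symmDiff_ball_subset {X : Type*} [PseudoMetricSpace X] (x y : X) (r : ℝ) :
    ball x r ∆ ball y r ⊆ ball y (r + dist x y) \ ball y (r - dist x y) := by
  rintro z (⟨hx, hy⟩ | ⟨hy, hx⟩) <;> simp only [mem_ball, Set.mem_sdiff, not_lt] at hx hy ⊢
  · exact ⟨by linarith [dist_triangle z x y], by linarith [dist_nonneg (x := x) (y := y)]⟩
  · exact ⟨by linarith [dist_nonneg (x := x) (y := y)],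
      by linarith [dist_triangle z y x, dist_comm x y]⟩

theorem setIntegral_sub_setIntegral_eq_sdiff {α F : Type*} [MeasurableSpace α] {ν : Measure α}
    [NormedAddCommGroup F] [NormedSpace ℝ F] {f : α → F} {s t : Set α} (hs : MeasurableSet s)
    (ht : MeasurableSet t) (hfs : IntegrableOn f s ν) (hft : IntegrableOn f t ν) :
    (∫ x in s, f x ∂ν) - ∫ x in t, f x ∂ν =
      (∫ x in s \ t, f x ∂ν) - ∫ x in t \ s, f x ∂ν := by
  rw [← integral_inter_add_sdiff ht hfs, ← integral_inter_add_sdiff hs hft, Set.inter_comm s t,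
    add_sub_add_left_eq_sub]

theorem norm_setIntegral_sub_setIntegral_le_of_measureReal_eq {α F : Type*} [MeasurableSpace α]
    {ν : Measure α} [NormedAddCommGroup F] [NormedSpace ℝ F] [CompleteSpace F] {f : α → F}
    {s t : Set α} {c : F} {C : ℝ} (hs : MeasurableSet s) (ht : MeasurableSet t)
    (hs_fin : ν s ≠ ∞) (ht_fin : ν t ≠ ∞) (hst : ν.real s = ν.real t)
    (hfs : IntegrableOn f s ν) (hft : IntegrableOn f t ν) (hC : ∀ x ∈ s ∆ t, ‖f x - c‖ ≤ C) :
    ‖(∫ x in s, f x ∂ν) - ∫ x in t, f x ∂ν‖ ≤ C * ν.real (s ∆ t) := by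
  have hcs : IntegrableOn (fun _ => c) s ν := integrableOn_const hs_fin
  have hct : IntegrableOn (fun _ => c) t ν := integrableOn_const ht_fin
  have h_sub : (∫ x in s, f x ∂ν) - ∫ x in t, f x ∂ν =
      (∫ x in s \ t, (f x - c) ∂ν) - ∫ x in t \ s, (f x - c) ∂ν := by
    rw [← setIntegral_sub_setIntegral_eq_sdiff (f := fun x => f x - c) hs ht (hfs.sub hcs)
      (hft.sub hct), integral_sub hfs hcs, integral_sub hft hct, setIntegral_const,
      setIntegral_const, hst, sub_sub_sub_cancel_right]
  have hst_fin : ν (s \ t) < ∞ := measure_lt_top_of_subset Set.sdiff_subset hs_fin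
  have hts_fin : ν (t \ s) < ∞ := measure_lt_top_of_subset Set.sdiff_subset ht_fin
  rw [h_sub, measureReal_symmDiff_eq hs ht hs_fin ht_fin, mul_add]
  exact (norm_sub_le _ _).trans <| add_le_add
    (norm_setIntegral_le_of_norm_le_const hst_fin fun x hx => hC x (.inl hx))
    (norm_setIntegral_le_of_norm_le_const hts_fin fun x hx => hC x (.inr hx))

theorem integrableOn_ball_of_locallyIntegrable {X F : Type*} [PseudoMetricSpace X] [ProperSpace X]
    [MeasurableSpace X] {ν : Measure X} [NormedAddCommGroup F] {f : X → F}
    (hf : LocallyIntegrable f ν) (x : X) (r : ℝ) : IntegrableOn f (ball x r) ν :=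
  (hf.integrableOn_isCompact (isCompact_closedBall x r)).mono_set ball_subset_closedBall

theorem eventually_norm_sub_le_of_deriv_isLittleO {F : Type*} [NormedAddCommGroup F]
    [NormedSpace ℝ F] {φ : ℝ → F} {n : ℕ} (hφ : ∀ᶠ r in atTop, DifferentiableAt ℝ φ r)
    (hφ' : deriv φ =o[atTop] fun r => (r ^ n)⁻¹) {A ε : ℝ} (hA : 0 ≤ A) (hε : 0 < ε) :
    ∀ᶠ K in atTop, ∀ r ∈ Set.Icc (K - A) (K + A), ‖φ r - φ K‖ ≤ ε * A * (K ^ n)⁻¹ := by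
  have h_bound := hφ'.bound (c := ε / 2 ^ n) (by positivity)
  obtain ⟨R, hR⟩ := eventually_atTop.1 (hφ.and h_bound)
  filter_upwards [eventually_ge_atTop (R + A), eventually_ge_atTop (2 * A), eventually_gt_atTop 0]
    with K hKR hKA hK r hr
  have h_deriv : ∀ x ∈ Set.Icc (K - A) (K + A), ‖deriv φ x‖ ≤ ε * (K ^ n)⁻¹ := fun x hx =>
    have hKx : K / 2 ≤ x := by linarith [hx.1]
    calc ‖deriv φ x‖ ≤ ε / 2 ^ n * ‖(x ^ n)⁻¹‖ := (hR x (by linarith [hx.1])).2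
      _ = ε / 2 ^ n * (x ^ n)⁻¹ := by
        rw [norm_of_nonneg (inv_nonneg.2 (pow_nonneg (by linarith) n))]
      _ ≤ ε / 2 ^ n * ((K / 2) ^ n)⁻¹ := by gcongr
      _ = ε * (K ^ n)⁻¹ := by rw [div_pow]; field_simp
  calc ‖φ r - φ K‖ ≤ ε * (K ^ n)⁻¹ * ‖r - K‖ :=
        (convex_Icc _ _).norm_image_sub_le_of_norm_deriv_le
          (fun x hx => (hR x (by linarith [hx.1])).1) h_deriv
          ⟨by linarith, by linarith⟩ hr
    _ ≤ ε * (K ^ n)⁻¹ * A := by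
      gcongr
      exact abs_le.2 ⟨by linarith [hr.1], by linarith [hr.2]⟩
    _ = ε * A * (K ^ n)⁻¹ := by ring

variable {E : Type*} [NormedAddCommGroup E] [NormedSpace ℝ E] [FiniteDimensional ℝ E]
  [MeasurableSpace E] [BorelSpace E] {ν : Measure E} [ν.IsAddHaarMeasure]

theorem addHaar_real_ball_sdiff_ball_le [Nontrivial E] (x : E) {r R : ℝ} (hr : 0 ≤ r)
    (hrR : r ≤ R) :
    ν.real (ball x R \ ball x r) ≤
      (R - r) * finrank ℝ E * R ^ (finrank ℝ E - 1) * ν.real (ball 0 1) := by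
  have h_ball {s : ℝ} (hs : 0 ≤ s) :
      ν.real (ball x s) = s ^ finrank ℝ E * ν.real (ball 0 1) := by
    rw [measureReal_def, Measure.addHaar_ball ν x hs, ENNReal.toReal_mul,
      ENNReal.toReal_ofReal (by positivity), measureReal_def]
  rw [measureReal_sdiff (ball_subset_ball hrR) measurableSet_ball, h_ball hr,
    h_ball (hr.trans hrR), ← sub_mul]
  gcongr
  have h := (le_abs_self _).trans (abs_pow_sub_pow_le R r (finrank ℝ E))
  rwa [abs_of_nonneg (sub_nonneg.2 hrR), abs_of_nonneg hr, abs_of_nonneg (hr.trans hrR),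
    max_eq_left hrR] at h

theorem eventually_addHaar_real_symmDiff_ball_le [Nontrivial E] (x : E) :
    ∀ᶠ K : ℝ in atTop, ν.real (ball x K ∆ ball 0 K) ≤
      2 ^ finrank ℝ E * finrank ℝ E * ‖x‖ * ν.real (ball 0 1) * K ^ (finrank ℝ E - 1) := by
  filter_upwards [eventually_ge_atTop ‖x‖] with K hK
  have hK₀ : 0 ≤ K := (norm_nonneg x).trans hK
  have h_fin : ν (ball 0 (K + ‖x‖) \ ball 0 (K - ‖x‖)) ≠ ∞ :=
    measure_ne_top_of_subset Set.sdiff_subset measure_ball_lt_top.ne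
  calc ν.real (ball x K ∆ ball 0 K)
      ≤ ν.real (ball 0 (K + ‖x‖) \ ball 0 (K - ‖x‖)) :=
        measureReal_mono (by simpa using symmDiff_ball_subset x 0 K) h_fin
    _ ≤ (K + ‖x‖ - (K - ‖x‖)) * finrank ℝ E * (K + ‖x‖) ^ (finrank ℝ E - 1) *
          ν.real (ball 0 1) :=
        addHaar_real_ball_sdiff_ball_le 0 (by linarith) (by linarith [norm_nonneg x])
    _ ≤ (2 * ‖x‖) * finrank ℝ E * (2 * K) ^ (finrank ℝ E - 1) *
          ν.real (ball 0 1) := by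
        gcongr <;> linarith
    _ = _ := by
        rw [mul_pow, ← mul_pow_sub_one (finrank_pos (R := ℝ) (M := E)).ne' (2 : ℝ)]
        ring

theorem tendsto_setIntegral_ball_sub_setIntegral_ball [Nontrivial E] {F : Type*}
    [NormedAddCommGroup F] [NormedSpace ℝ F] [CompleteSpace F] {φ : ℝ → F}
    (h_int : LocallyIntegrable (fun x : E => φ ‖x‖) ν)
    (hφ : ∀ᶠ r in atTop, DifferentiableAt ℝ φ r)
    (hφ' : deriv φ =o[atTop] fun r => (r ^ (finrank ℝ E - 1))⁻¹) (a : E) :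
    Tendsto (fun K : ℝ => (∫ x in ball a K, φ ‖x‖ ∂ν) - ∫ x in ball 0 K, φ ‖x‖ ∂ν)
      atTop (𝓝 0) := by
  have h_ball (x : E) (r : ℝ) : IntegrableOn (fun x : E => φ ‖x‖) (ball x r) ν :=
    integrableOn_ball_of_locallyIntegrable h_int x r
  set V : ℝ := 2 ^ finrank ℝ E * finrank ℝ E * ‖a‖ * ν.real (ball 0 1)
  have hV : 0 ≤ ‖a‖ * V := by positivity
  rw [Metric.tendsto_nhds]
  intro ε hε
  have hδ : 0 < ε / (‖a‖ * V + 1) := by positivity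
  filter_upwards [eventually_norm_sub_le_of_deriv_isLittleO hφ hφ' (norm_nonneg a) hδ,
    eventually_addHaar_real_symmDiff_ball_le (ν := ν) a, eventually_gt_atTop 0]
    with K h_osc h_vol hK
  have h_near : ∀ x ∈ ball a K ∆ ball 0 K, ‖φ ‖x‖ - φ K‖ ≤
      ε / (‖a‖ * V + 1) * ‖a‖ * (K ^ (finrank ℝ E - 1))⁻¹ := fun x hx => by
    have hx' := symmDiff_ball_subset a 0 K hx
    simp only [dist_zero_right, Set.mem_sdiff, mem_ball_zero_iff, not_lt] at hx'
    exact h_osc _ ⟨hx'.2, hx'.1.le⟩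
  rw [dist_zero_right]
  calc ‖(∫ x in ball a K, φ ‖x‖ ∂ν) - ∫ x in ball 0 K, φ ‖x‖ ∂ν‖
      ≤ ε / (‖a‖ * V + 1) * ‖a‖ * (K ^ (finrank ℝ E - 1))⁻¹ * ν.real (ball a K ∆ ball 0 K) :=
        norm_setIntegral_sub_setIntegral_le_of_measureReal_eq measurableSet_ball
          measurableSet_ball measure_ball_lt_top.ne measure_ball_lt_top.ne
          (Measure.addHaar_real_ball_center ν a K) (h_ball a K) (h_ball 0 K) h_near
    _ ≤ ε / (‖a‖ * V + 1) * ‖a‖ * (K ^ (finrank ℝ E - 1))⁻¹ *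
          (V * K ^ (finrank ℝ E - 1)) := by gcongr
    _ = ε * (‖a‖ * V / (‖a‖ * V + 1)) := by field_simp
    _ < ε := mul_lt_of_lt_one_right hε ((div_lt_one (by positivity)).2 (lt_add_one _))

theorem setIntegral_ball_comp_add_right {G F : Type*} [SeminormedAddCommGroup G]
    [MeasurableSpace G] [BorelSpace G] {ν : Measure G} [ν.IsAddRightInvariant]
    [NormedAddCommGroup F] [NormedSpace ℝ F] (f : G → F) (x a : G) (r : ℝ) :
    ∫ y in ball x r, f (y + a) ∂ν = ∫ y in ball (x + a) r, f y ∂ν := by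
  simpa using (measurePreserving_add_right ν a).setIntegral_preimage_emb
    (measurableEmbedding_addRight a) f (ball (x + a) r)

theorem integrableOn_ball_comp_add_right_iff {G F : Type*} [SeminormedAddCommGroup G]
    [MeasurableSpace G] [BorelSpace G] {ν : Measure G} [ν.IsAddRightInvariant]
    [NormedAddCommGroup F] {f : G → F} {x a : G} {r : ℝ} :
    IntegrableOn (fun y => f (y + a)) (ball x r) ν ↔ IntegrableOn f (ball (x + a) r) ν := by
  simpa [Function.comp_def] using (measurePreserving_add_right ν a).integrableOn_comp_preimage
    (f := f) (s := ball (x + a) r) (measurableEmbedding_addRight a)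

end Balls

section InverseSquare

open Metric Module

theorem integrable_inv_sq_add_sq {c : ℝ} (hc : c ≠ 0) :
    Integrable fun y : ℝ => (y ^ 2 + c ^ 2)⁻¹ := by
  refine ((integrable_inv_one_add_sq.comp_mul_left' (inv_ne_zero hc)).const_mul
    (c ^ 2)⁻¹).congr (.of_forall fun y => ?_)
  simp only
  field_simp
  ring

theorem integral_Ioi_inv_sq_add_sq {c : ℝ} (hc : 0 < c) :
    ∫ y in Set.Ioi (0 : ℝ), (y ^ 2 + c ^ 2)⁻¹ = π / (2 * c) := by
  have h (y : ℝ) : (y ^ 2 + c ^ 2)⁻¹ = (c ^ 2)⁻¹ * (1 + (c⁻¹ * y) ^ 2)⁻¹ := by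
    field_simp
    ring
  simp only [h]
  rw [integral_const_mul, integral_comp_mul_left_Ioi (fun y => (1 + y ^ 2)⁻¹) 0 (inv_pos.2 hc),
    mul_zero, integral_Ioi_inv_one_add_sq, arctan_zero, sub_zero, inv_inv, smul_eq_mul]
  field_simp

theorem sq_smul_inv_sq_add_sq_sub_inv_sq (c : ℝ) {y : ℝ} (hy : 0 < y) :
    y ^ 2 • ((y ^ 2 + c ^ 2)⁻¹ - (y ^ 2)⁻¹) = -c ^ 2 * (y ^ 2 + c ^ 2)⁻¹ := by
  rw [smul_eq_mul]
  field_simp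
  ring

theorem isLittleO_deriv_inv_sq :
    (deriv fun r : ℝ => (r ^ 2)⁻¹) =o[atTop] fun r => (r ^ 2)⁻¹ := by
  have h_deriv : (deriv fun r : ℝ => (r ^ 2)⁻¹) =ᶠ[atTop] fun r => -2 / r * (r ^ 2)⁻¹ := by
    filter_upwards [eventually_gt_atTop 0] with r hr
    rw [((hasDerivAt_pow 2 r).fun_inv (pow_ne_zero 2 hr.ne')).deriv]
    push_cast
    field_simp
  have h_lim : Tendsto (fun r : ℝ => -2 / r) atTop (𝓝 0) :=
    tendsto_const_nhds.div_atTop tendsto_id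
  exact Asymptotics.isLittleO_iff_exists_eq_mul.2 ⟨_, h_lim, h_deriv⟩

variable {E : Type*} [NormedAddCommGroup E] [NormedSpace ℝ E] [FiniteDimensional ℝ E]
  [MeasurableSpace E] [BorelSpace E] {ν : Measure E} [ν.IsAddHaarMeasure]

theorem locallyIntegrable_inv_norm_sq (hE : 3 ≤ finrank ℝ E) :
    LocallyIntegrable (fun x : E => (‖x‖ ^ 2)⁻¹) ν := by
  refine locallyIntegrable_of_norm_le_rpow (C := 1) (α := 2) (by lia)
    (by exact_mod_cast hE) (.of_forall fun x => ?_) (by fun_prop)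
  rw [rpow_neg (norm_nonneg x), one_mul, rpow_ofNat, norm_of_nonneg (by positivity)]

theorem integrable_inv_norm_sq_add_sq_sub_inv_norm_sq (hE : finrank ℝ E = 3) (c : ℝ) :
    Integrable (fun x : E => (‖x‖ ^ 2 + c ^ 2)⁻¹ - (‖x‖ ^ 2)⁻¹) ν := by
  obtain rfl | hc := eq_or_ne c 0
  · simp
  have : Nontrivial E := nontrivial_of_finrank_pos (R := ℝ) (by lia)
  refine (integrable_fun_norm_addHaar ν
    (f := fun y : ℝ => (y ^ 2 + c ^ 2)⁻¹ - (y ^ 2)⁻¹)).2 ?_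
  rw [hE]
  exact ((integrable_inv_sq_add_sq hc).const_mul (-c ^ 2)).integrableOn.congr_fun
    (fun y hy => (sq_smul_inv_sq_add_sq_sub_inv_sq c hy).symm) measurableSet_Ioi

theorem integral_inv_norm_sq_add_sq_sub_inv_norm_sq (hE : finrank ℝ E = 3) {c : ℝ}
    (hc : 0 ≤ c) :
    ∫ x : E, ((‖x‖ ^ 2 + c ^ 2)⁻¹ - (‖x‖ ^ 2)⁻¹) ∂ν = -(3 * ν.real (ball 0 1) * (π / 2 * c)) := by
  obtain rfl | hc := hc.eq_or_lt
  · simp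
  have : Nontrivial E := nontrivial_of_finrank_pos (R := ℝ) (by lia)
  rw [integral_fun_norm_addHaar ν (fun y : ℝ => (y ^ 2 + c ^ 2)⁻¹ - (y ^ 2)⁻¹), hE,
    setIntegral_congr_fun measurableSet_Ioi fun y hy => sq_smul_inv_sq_add_sq_sub_inv_sq c hy,
    integral_const_mul, integral_Ioi_inv_sq_add_sq hc, nsmul_eq_mul, smul_eq_mul]
  push_cast
  field_simp

theorem tendsto_setIntegral_ball_inv_norm_add_sq_add_sq_sub_inv_norm_sq (hE : finrank ℝ E = 3)
    {c : ℝ} (hc : 0 ≤ c) (a : E) :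
    Tendsto (fun K : ℝ => ∫ x in ball 0 K, ((‖x + a‖ ^ 2 + c ^ 2)⁻¹ - (‖x‖ ^ 2)⁻¹) ∂ν) atTop
      (𝓝 (-(3 * ν.real (ball 0 1) * (π / 2 * c)))) := by
  have : Nontrivial E := nontrivial_of_finrank_pos (R := ℝ) (by lia)
  set h : E → ℝ := fun x => (‖x‖ ^ 2 + c ^ 2)⁻¹ - (‖x‖ ^ 2)⁻¹ with h_def
  set g : E → ℝ := fun x => (‖x‖ ^ 2)⁻¹ with g_def
  have hh : Integrable h ν := integrable_inv_norm_sq_add_sq_sub_inv_norm_sq hE c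
  have hg : LocallyIntegrable g ν := locallyIntegrable_inv_norm_sq hE.ge
  have hg_ball (x : E) (r : ℝ) : IntegrableOn g (ball x r) ν :=
    integrableOn_ball_of_locallyIntegrable hg x r
  have h_lim : Tendsto (fun K => ∫ x in ball a K, h x ∂ν) atTop (𝓝 (∫ x, h x ∂ν)) :=
    (aecover_ball tendsto_id).integral_tendsto_of_countably_generated hh
  have g_lim : Tendsto (fun K => (∫ x in ball a K, g x ∂ν) - ∫ x in ball 0 K, g x ∂ν)
      atTop (𝓝 0) := by
    refine tendsto_setIntegral_ball_sub_setIntegral_ball (φ := fun r => (r ^ 2)⁻¹) hg ?_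
      (by simpa only [hE] using isLittleO_deriv_inv_sq) a
    filter_upwards [eventually_ne_atTop 0] with r hr
    exact (differentiableAt_id.pow 2).fun_inv (pow_ne_zero 2 hr)
  rw [← integral_inv_norm_sq_add_sq_sub_inv_norm_sq hE hc, ← add_zero (∫ x, _ ∂ν)]
  refine (h_lim.add g_lim).congr fun K => ?_
  have hhg : IntegrableOn (fun x => h x + g x) (ball a K) ν :=
    hh.integrableOn.add (hg_ball a K)
  have h_shift : IntegrableOn (fun x => h (x + a) + g (x + a)) (ball 0 K) ν :=
    integrableOn_ball_comp_add_right_iff.2 ((zero_add a).symm ▸ hhg)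
  calc (∫ x in ball a K, h x ∂ν) + ((∫ x in ball a K, g x ∂ν) - ∫ x in ball 0 K, g x ∂ν)
      = (∫ x in ball a K, (h x + g x) ∂ν) - ∫ x in ball 0 K, g x ∂ν := by
        rw [← add_sub_assoc, integral_add hh.integrableOn (hg_ball a K)]
    _ = ∫ x in ball 0 K, (h (x + a) + g (x + a) - g x) ∂ν := by
        rw [integral_sub h_shift (hg_ball 0 K),
          setIntegral_ball_comp_add_right (fun x => h x + g x), zero_add]
    _ = ∫ x in ball 0 K, ((‖x + a‖ ^ 2 + c ^ 2)⁻¹ - (‖x‖ ^ 2)⁻¹) ∂ν := by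
        simp only [h_def, g_def, sub_add_cancel]

end InverseSquare

theorem two_mul_sum_sum_Ioi_inner {ι E : Type*} [Fintype ι] [LinearOrder ι]
    [LocallyFiniteOrderTop ι] [LocallyFiniteOrderBot ι]
    [SeminormedAddCommGroup E] [InnerProductSpace ℝ E] (q : ι → E) :
    2 * ∑ i, ∑ j ∈ Finset.Ioi i, ⟪q i, q j⟫_ℝ = ‖∑ i, q i‖ ^ 2 - ∑ i, ‖q i‖ ^ 2 := by
  have h := Finset.sum_sum_Ioi_add_eq_sum_sum_off_diag fun i j => ⟪q i, q j⟫_ℝ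
  simp_rw [real_inner_comm, ← two_mul, ← Finset.mul_sum] at h
  rw [h, ← real_inner_self_eq_norm_sq, sum_inner, eq_sub_iff_add_eq, ← Finset.sum_add_distrib]
  refine Finset.sum_congr rfl fun i _ => ?_
  rw [inner_sum, ← Finset.sum_compl_add_sum {i}, Finset.sum_singleton, real_inner_self_eq_norm_sq]

/-- The radicand of `Lker`: as a function of the last variable `t`, the denominator of `Gker` is
`‖t + (m + 1)⁻¹ • ∑ i, q i‖ ^ 2 + Lradicand m μ q`. -/
def Lradicand (m μ : ℝ) {n : ℕ} (q : Fin n → R3) : ℝ :=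
  m * (m + 2) / (m + 1) ^ 2 * ∑ i, ‖q i‖ ^ 2
    + 2 * m / (m + 1) ^ 2 * ∑ i, ∑ j ∈ Finset.Ioi i, ⟪q i, q j⟫_ℝ + μ

theorem Lradicand_eq {m : ℝ} (hm : m ≠ -1) (μ : ℝ) {n : ℕ} (q : Fin n → R3) :
    Lradicand m μ q =
      m / (m + 1) * ∑ i, ‖q i‖ ^ 2 + m / (m + 1) ^ 2 * ‖∑ i, q i‖ ^ 2 + μ := by
  have hm' : m + 1 ≠ 0 := fun h => hm (eq_neg_of_add_eq_zero_left h)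
  rw [← sub_add_cancel (‖∑ i, q i‖ ^ 2) (∑ i, ‖q i‖ ^ 2), ← two_mul_sum_sum_Ioi_inner, Lradicand]
  field_simp
  ring

theorem Lradicand_nonneg {m μ : ℝ} (hm : 0 ≤ m) (hμ : 0 ≤ μ) {n : ℕ} (q : Fin n → R3) :
    0 ≤ Lradicand m μ q := by
  rw [Lradicand_eq (by linarith)]
  positivity

theorem Gker_snoc {m : ℝ} (hm : m ≠ -1) (μ : ℝ) {n : ℕ} (q : Fin n → R3) (t : R3) :
    Gker m μ (Fin.snoc q t : Fin (n + 1) → R3) =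
      (‖t + (m + 1)⁻¹ • ∑ i, q i‖ ^ 2 + Lradicand m μ q)⁻¹ := by
  have hm' : m + 1 ≠ 0 := fun h => hm (eq_neg_of_add_eq_zero_left h)
  rw [Gker, Lradicand_eq hm, div_mul_eq_mul_div, two_mul_sum_sum_Ioi_inner]
  simp only [Fin.sum_univ_castSucc, Fin.snoc_castSucc, Fin.snoc_last]
  rw [add_comm (∑ i, q i), norm_add_sq_real, norm_add_sq_real, norm_smul, inner_smul_right, mul_pow,
    norm_eq_abs, sq_abs]
  congr 1
  field_simp
  ring

theorem ball_integral_G_tendsto_neg_L_general {m μ : ℝ} (hm : m ≠ -1) {n : ℕ} (q : Fin n → R3)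
    (hq : 0 ≤ Lradicand m μ q) :
    Tendsto
      (fun K : ℝ => ∫ t in Metric.ball (0 : R3) K,
        (Gker m μ (Fin.snoc q t : Fin (n + 1) → R3) - (‖t‖ ^ 2)⁻¹))
      atTop (𝓝 (-Lker m μ q)) := by
  have h_vol : volume.real (Metric.ball (0 : R3) 1) = π * 4 / 3 := by
    rw [measureReal_def, EuclideanSpace.volume_ball_fin_three, ENNReal.ofReal_one, one_pow, one_mul,
      ENNReal.toReal_ofReal (by positivity)]
  have h_lim := tendsto_setIntegral_ball_inv_norm_add_sq_add_sq_sub_inv_norm_sq (ν := volume)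
    finrank_euclideanSpace_fin (sqrt_nonneg (Lradicand m μ q)) ((m + 1)⁻¹ • ∑ i, q i)
  have h_L : 3 * (π * 4 / 3) * (π / 2 * √(Lradicand m μ q)) = Lker m μ q := by
    rw [Lker, ← Lradicand]
    ring
  simpa only [sq_sqrt hq, ← Gker_snoc hm, h_vol, h_L] using h_lim

/-- for `N = n+2 ≥ 2` and fixed `q₁,…,q_{N-1}`,
`lim_{K→∞} ∫_{|q_N|<K} (G(q₁,…,q_N) - 1/|q_N|²) dq_N = -L(q₁,…,q_{N-1})`. -/
theorem ball_integral_G_tendsto_neg_L (m μ : ℝ) (hm : 0 < m) (hμ : 0 < μ)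
    (n : ℕ) (q : Fin (n + 1) → R3) :
    Filter.Tendsto
      (fun K : ℝ => ∫ t in Metric.ball (0 : R3) K,
        (Gker m μ (Fin.snoc q t) - (‖t‖ ^ 2)⁻¹))
      Filter.atTop (nhds (-Lker m μ q)) :=
  ball_integral_G_tendsto_neg_L_general (by linarith) q (Lradicand_nonneg hm.le hμ.le q)
end
end

section
/- For every m>0 and every 0≤β≤1 one has Λ_β(m) ≤ 4√2·(1+m)²·(2+4m+m²)^{3/2} / (π·(m(m+2))³). -/
open MeasureTheory Real Filter Topology
open scoped InnerProductSpace ENNReal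

noncomputable section

/-- `Λ_β(m)`, as a supremum in the extended nonnegative reals. -/
def Lamb (m β : ℝ) : ℝ≥0∞ :=
  ⨆ (s : R3) (K : R3) (Q : ℝ) (_ : 0 < Q),
    ENNReal.ofReal ((‖s‖ ^ 2 + Q ^ 2) / (π ^ 2 * (1 + m))) *
      ∫⁻ t : R3, ENNReal.ofReal ((1 / ‖t‖ ^ 2) *
        (ellm m s K Q ^ ((β - 1) / 2) / ellm m t K Q ^ ((β + 1) / 2)
          + ellm m t K Q ^ ((β - 1) / 2) / ellm m s K Q ^ ((β + 1) / 2)) * Dker m s t K Q)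

/-!
Put `A = (2 + m)⁻¹`, `σ = s + A K`, `τ = t + A K`, `p = m / (1 + m) (Q² + A |K|²)` and
`M = m (m + 2) / (m + 1)² = 1 - (1 + m)⁻²`. Completing the square gives `ℓ_m(s)² = M |σ|² + p`, and
Cauchy–Schwarz gives `D ≤ |σ| |τ| / (M S²)` with `S = |σ|² + |τ|² + p`. By weighted AM–GM the two
`β`-dependent weights add up to at most `1 / ℓ_m(s) + 1 / ℓ_m(t)`; since `|σ| / ℓ_m(s)` and
`|τ| / ℓ_m(t)` are at most `M^{-1/2}`, the weighted kernel is at most `√2 (M S)^{-3/2}`. Minimising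
`S` over `K` bounds it below by a multiple of `|s|² + Q² + |t|²`, and what is left is the radial
integral `∫ |t|⁻² c (c + |t|²)^{-3/2} dt = 4π` with `c = |s|² + Q²`, which no longer depends on
`s`, `K` and `Q`.
-/

theorem hasDerivAt_div_sqrt_add_sq {c r : ℝ} (h : 0 < c + r ^ 2) :
    HasDerivAt (fun x : ℝ => x / √(c + x ^ 2)) (c / √(c + r ^ 2) ^ 3) r := by
  have hsq : √(c + r ^ 2) ^ 2 = c + r ^ 2 := sq_sqrt h.le
  have hs : 0 < √(c + r ^ 2) := sqrt_pos.2 h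
  have hsqrt : HasDerivAt (fun x : ℝ => √(c + x ^ 2)) (r / √(c + r ^ 2)) r := by
    refine (((hasDerivAt_pow 2 r).const_add c).sqrt h.ne').congr_deriv ?_
    field_simp
    norm_num
  refine ((hasDerivAt_id r).div hsqrt hs.ne').congr_deriv ?_
  simp only [id]
  field_simp
  linear_combination hsq

theorem tendsto_div_sqrt_add_sq_atTop (c : ℝ) :
    Tendsto (fun x : ℝ => x / √(c + x ^ 2)) atTop (𝓝 1) := by
  have hzero : Tendsto (fun x : ℝ => c / x ^ 2) atTop (𝓝 0) :=
    tendsto_const_nhds.div_atTop (tendsto_pow_atTop two_ne_zero)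
  have hlim : Tendsto (fun x : ℝ => (√(c / x ^ 2 + 1))⁻¹) atTop (𝓝 1) := by
    simpa using (hzero.add_const 1).sqrt.inv₀ (by simp)
  refine hlim.congr' ?_
  filter_upwards [eventually_gt_atTop 0] with x hx
  rw [show c + x ^ 2 = (c / x ^ 2 + 1) * x ^ 2 by field_simp, sqrt_mul' _ (sq_nonneg x),
    sqrt_sq hx.le, div_mul_cancel_right₀ hx.ne']

theorem integrableOn_Ioi_div_sqrt_add_sq_pow_three {c : ℝ} (hc : 0 < c) :
    IntegrableOn (fun r : ℝ => c / √(c + r ^ 2) ^ 3) (Set.Ioi 0) :=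
  integrableOn_Ioi_deriv_of_nonneg' (fun _ _ => hasDerivAt_div_sqrt_add_sq (by positivity))
    (fun _ _ => by positivity) (tendsto_div_sqrt_add_sq_atTop c)

theorem integral_Ioi_div_sqrt_add_sq_pow_three {c : ℝ} (hc : 0 < c) :
    ∫ r in Set.Ioi (0 : ℝ), c / √(c + r ^ 2) ^ 3 = 1 := by
  rw [integral_Ioi_of_hasDerivAt_of_nonneg'
    (fun _ _ => hasDerivAt_div_sqrt_add_sq (by positivity)) (fun _ _ => by positivity)
    (tendsto_div_sqrt_add_sq_atTop c), zero_div, sub_zero]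

theorem lintegral_inv_norm_pow_mul_addHaar {E : Type*} [NormedAddCommGroup E] [NormedSpace ℝ E]
    [FiniteDimensional ℝ E] [Nontrivial E] [MeasurableSpace E] [BorelSpace E] (μ : Measure E)
    [μ.IsAddHaarMeasure] {f : ℝ → ℝ} (hf : IntegrableOn f (Set.Ioi 0))
    (hf₀ : ∀ r, 0 ≤ r → 0 ≤ f r) :
    ∫⁻ t, ENNReal.ofReal ((‖t‖ ^ (Module.finrank ℝ E - 1))⁻¹ * f ‖t‖) ∂μ =
      ENNReal.ofReal (Module.finrank ℝ E * μ.real (Metric.ball 0 1) * ∫ r in Set.Ioi 0, f r) := by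
  set d := Module.finrank ℝ E
  set g : ℝ → ℝ := fun r => (r ^ (d - 1))⁻¹ * f r
  have hcancel : Set.EqOn (fun r => r ^ (d - 1) • g r) f (Set.Ioi 0) := fun r hr =>
    mul_inv_cancel_left₀ (pow_pos (Set.mem_Ioi.1 hr) _).ne' _
  have hg : Integrable (fun t : E => g ‖t‖) μ :=
    (integrable_fun_norm_addHaar μ).2 ((integrableOn_congr_fun hcancel measurableSet_Ioi).2 hf)
  have hg₀ (t : E) : 0 ≤ g ‖t‖ := mul_nonneg (by positivity) (hf₀ _ (norm_nonneg t))
  rw [← ofReal_integral_eq_lintegral_ofReal hg (ae_of_all _ hg₀), integral_fun_norm_addHaar,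
    setIntegral_congr_fun measurableSet_Ioi hcancel, nsmul_eq_mul, smul_eq_mul, mul_assoc]

theorem lintegral_inv_norm_sq_mul_div_sqrt_add_norm_sq_pow_three {c : ℝ} (hc : 0 < c) :
    ∫⁻ t : R3, ENNReal.ofReal ((‖t‖ ^ 2)⁻¹ * (c / √(c + ‖t‖ ^ 2) ^ 3)) =
      ENNReal.ofReal (4 * π) := by
  have hvol : (volume : Measure R3).real (Metric.ball 0 1) = π * 4 / 3 := by
    simp [Measure.real, show 0 ≤ π * 4 / 3 by positivity]
  have h := lintegral_inv_norm_pow_mul_addHaar (volume : Measure R3)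
    (integrableOn_Ioi_div_sqrt_add_sq_pow_three hc) fun r _ => by positivity
  rw [integral_Ioi_div_sqrt_add_sq_pow_three hc, hvol, finrank_euclideanSpace_fin] at h
  convert h using 2
  push_cast
  ring

/-- The `β`-dependent weight in the integrand of `Λ_β`, as a function of the two values `a`, `b`
of `ℓ_m`. -/
def symmWeight (β a b : ℝ) : ℝ :=
  a ^ ((β - 1) / 2) / b ^ ((β + 1) / 2) + b ^ ((β - 1) / 2) / a ^ ((β + 1) / 2)

theorem rpow_div_rpow_le_weighted_inv {a b β : ℝ} (ha : 0 ≤ a) (hb : 0 ≤ b) (hβ : |β| ≤ 1) :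
    a ^ ((β - 1) / 2) / b ^ ((β + 1) / 2) ≤ (1 - β) / 2 * a⁻¹ + (β + 1) / 2 * b⁻¹ := by
  obtain ⟨hβ₀, hβ₁⟩ := abs_le.1 hβ
  calc a ^ ((β - 1) / 2) / b ^ ((β + 1) / 2)
      = a⁻¹ ^ ((1 - β) / 2) * b⁻¹ ^ ((β + 1) / 2) := by
        rw [inv_rpow ha, inv_rpow hb, ← rpow_neg ha, ← div_eq_mul_inv, ← neg_div, neg_sub]
    _ ≤ (1 - β) / 2 * a⁻¹ + (β + 1) / 2 * b⁻¹ :=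
        geom_mean_le_arith_mean2_weighted (by linarith) (by linarith) (inv_nonneg.2 ha)
          (inv_nonneg.2 hb) (by ring)

theorem symmWeight_nonneg {a b : ℝ} (ha : 0 ≤ a) (hb : 0 ≤ b) (β : ℝ) : 0 ≤ symmWeight β a b := by
  unfold symmWeight
  positivity

theorem symmWeight_le_inv_add_inv {a b β : ℝ} (ha : 0 ≤ a) (hb : 0 ≤ b) (hβ : |β| ≤ 1) :
    symmWeight β a b ≤ a⁻¹ + b⁻¹ := by
  unfold symmWeight
  linarith [rpow_div_rpow_le_weighted_inv ha hb hβ, rpow_div_rpow_le_weighted_inv hb ha hβ]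

theorem div_sqrt_mul_sq_add_le {M p : ℝ} (hM : 0 < M) (hp : 0 ≤ p) (x : ℝ) :
    x / √(M * x ^ 2 + p) ≤ (√M)⁻¹ := by
  refine div_le_of_le_mul₀ (sqrt_nonneg _) (by positivity) ?_
  rw [le_inv_mul_iff₀ (sqrt_pos.2 hM)]
  refine le_sqrt_of_sq_le ?_
  rw [mul_pow, sq_sqrt hM.le]
  linarith

theorem add_le_sqrt_two_mul_sqrt_sq_add_sq_add {p : ℝ} (hp : 0 ≤ p) (x y : ℝ) :
    x + y ≤ √2 * √(x ^ 2 + y ^ 2 + p) := by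
  rw [← sqrt_mul zero_le_two]
  exact le_sqrt_of_sq_le (by linarith [add_sq_le (a := x) (b := y)])

theorem inv_sqrt_add_inv_sqrt_mul_div_le {M p x y : ℝ} (hM : 0 < M) (hp : 0 < p) (hx : 0 ≤ x)
    (hy : 0 ≤ y) :
    ((√(M * x ^ 2 + p))⁻¹ + (√(M * y ^ 2 + p))⁻¹) * (x * y / (M * (x ^ 2 + y ^ 2 + p) ^ 2)) ≤
      √2 / √(M * (x ^ 2 + y ^ 2 + p)) ^ 3 := by
  set S := x ^ 2 + y ^ 2 + p
  have hS : 0 < S := by positivity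
  calc ((√(M * x ^ 2 + p))⁻¹ + (√(M * y ^ 2 + p))⁻¹) * (x * y / (M * S ^ 2))
      = (x / √(M * x ^ 2 + p) * y + y / √(M * y ^ 2 + p) * x) / (M * S ^ 2) := by ring
    _ ≤ ((√M)⁻¹ * y + (√M)⁻¹ * x) / (M * S ^ 2) := by
        gcongr <;> exact div_sqrt_mul_sq_add_le hM hp.le _
    _ = (√M)⁻¹ * (x + y) / (M * S ^ 2) := by ring
    _ ≤ (√M)⁻¹ * (√2 * √S) / (M * S ^ 2) := by
        gcongr
        exact add_le_sqrt_two_mul_sqrt_sq_add_sq_add hp.le x y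
    _ = √2 / √(M * S) ^ 3 := by
        rw [sqrt_mul hM.le]
        nth_rewrite 2 [← sq_sqrt hM.le]
        nth_rewrite 2 [← sq_sqrt hS.le]
        field_simp

section QuadraticForms

variable {E : Type*} [NormedAddCommGroup E] [InnerProductSpace ℝ E]

theorem norm_add_smul_sq (s K : E) (a : ℝ) :
    ‖s + a • K‖ ^ 2 = ‖s‖ ^ 2 + 2 * a * ⟪s, K⟫_ℝ + a ^ 2 * ‖K‖ ^ 2 := by
  rw [norm_add_sq_real, inner_smul_right, norm_smul, mul_pow, norm_eq_abs, sq_abs, mul_assoc]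

theorem mul_norm_add_sq_add_mul_norm_sq {a b : ℝ} (hab : a + b ≠ 0) (s K : E) :
    a * ‖s + K‖ ^ 2 + b * ‖s‖ ^ 2 =
      (a + b) * ‖s + (a / (a + b)) • K‖ ^ 2 + a * b / (a + b) * ‖K‖ ^ 2 := by
  rw [norm_add_smul_sq, norm_add_sq_real]
  field_simp
  ring

/-- The right-hand side is minimal at `K = -a (a² + b)⁻¹ s`, where equality holds. -/
theorem div_mul_norm_sq_le_norm_add_smul_sq_add {a b : ℝ} (hab : 0 < a ^ 2 + b) (s K : E) :
    b / (a ^ 2 + b) * ‖s‖ ^ 2 ≤ ‖s + a • K‖ ^ 2 + b * ‖K‖ ^ 2 := by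
  have hsquare : ‖s + a • K‖ ^ 2 + b * ‖K‖ ^ 2 =
      b / (a ^ 2 + b) * ‖s‖ ^ 2 + (a ^ 2 + b) * ‖K + (a / (a ^ 2 + b)) • s‖ ^ 2 := by
    rw [norm_add_smul_sq, norm_add_smul_sq, real_inner_comm]
    field_simp
    ring
  rw [hsquare]
  exact le_add_of_nonneg_right (by positivity)

theorem one_sub_sq_mul_sq_le_sq_sub_inner_sq (θ : ℝ) {p : ℝ} (hp : 0 ≤ p) (u v : E) :
    (1 - θ ^ 2) * (‖u‖ ^ 2 + ‖v‖ ^ 2 + p) ^ 2 ≤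
      (‖u‖ ^ 2 + ‖v‖ ^ 2 + p) ^ 2 - (2 * θ * ⟪u, v⟫_ℝ) ^ 2 := by
  have hinner : |2 * ⟪u, v⟫_ℝ| ≤ ‖u‖ ^ 2 + ‖v‖ ^ 2 + p := by
    rw [abs_mul, abs_two]
    linarith [abs_real_inner_le_norm u v, two_mul_le_add_sq ‖u‖ ‖v‖]
  have hsq := mul_le_mul_of_nonneg_left (sq_le_sq' (abs_le.1 hinner).1 (abs_le.1 hinner).2)
    (sq_nonneg θ)
  linarith

end QuadraticForms

section Kernel

/-- The variable `s + A K`, `A = (2 + m)⁻¹`, centred at the minimiser of `s ↦ ℓ_m(s, K, Q)`. -/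
def shift (m : ℝ) (K s : R3) : R3 := s + (2 + m)⁻¹ • K

/-- The minimum of `ℓ_m(s, K, Q)²` over `s`, which is also the part of the bracket in `D` that does
not depend on `s` and `t`. -/
def massTerm (m : ℝ) (K : R3) (Q : ℝ) : ℝ := m / (1 + m) * (Q ^ 2 + (2 + m)⁻¹ * ‖K‖ ^ 2)

/-- The expression in square brackets in the denominator of `D(s, t, K, Q)`. -/
def bracket (m : ℝ) (s t K : R3) (Q : ℝ) : ℝ :=
  ‖shift m K s‖ ^ 2 + ‖shift m K t‖ ^ 2 + massTerm m K Q

variable {m : ℝ}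

theorem massTerm_pos (hm : 0 < m) (K : R3) {Q : ℝ} (hQ : Q ≠ 0) : 0 < massTerm m K Q := by
  unfold massTerm
  positivity

theorem ellm_eq_sqrt_shift (hm : 0 < m) (s K : R3) (Q : ℝ) :
    ellm m s K Q = √(m * (m + 2) / (m + 1) ^ 2 * ‖shift m K s‖ ^ 2 + massTerm m K Q) := by
  have hsum : m / (m + 1) ^ 2 + m / (m + 1) = m * (m + 2) / (m + 1) ^ 2 := by
    field_simp
    ring
  have hshift : m / (m + 1) ^ 2 / (m * (m + 2) / (m + 1) ^ 2) = (2 + m)⁻¹ := by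
    field_simp
    ring
  unfold ellm
  rw [mul_add (m / (m + 1)), ← add_assoc,
    mul_norm_add_sq_add_mul_norm_sq (by positivity), hsum, hshift, shift, massTerm]
  congr 1
  field_simp
  ring

theorem Dker_le_norm_mul_norm_div (hm : 0 < m) (s t K : R3) {Q : ℝ} (hQ : Q ≠ 0) :
    Dker m s t K Q ≤ ‖shift m K s‖ * ‖shift m K t‖ /
      (m * (m + 2) / (m + 1) ^ 2 * bracket m s t K Q ^ 2) := by
  have hp := massTerm_pos hm K hQ
  have hθ : m * (m + 2) / (m + 1) ^ 2 = 1 - ((1 + m)⁻¹) ^ 2 := by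
    field_simp
    ring
  have hden := one_sub_sq_mul_sq_le_sq_sub_inner_sq (1 + m)⁻¹ hp.le (shift m K s) (shift m K t)
  rw [← hθ, ← div_eq_mul_inv] at hden
  exact div_le_div₀ (by positivity) (abs_real_inner_le_norm _ _)
    (by unfold bracket; positivity) hden

theorem mul_norm_sq_add_le_bracket (hm : 0 < m) (s t K : R3) (Q : ℝ) :
    m * (m + 2) / (2 + 4 * m + m ^ 2) * (‖s‖ ^ 2 + Q ^ 2 + ‖t‖ ^ 2) ≤ bracket m s t K Q := by
  set κ := m * (m + 2) / (2 + 4 * m + m ^ 2)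
  set b := m / (2 * (1 + m) * (2 + m)) with hb
  have hκ : b / ((2 + m)⁻¹ ^ 2 + b) = κ := by
    simp only [κ, hb]
    field_simp
    ring
  have hmin (s : R3) : κ * ‖s‖ ^ 2 ≤ ‖shift m K s‖ ^ 2 + b * ‖K‖ ^ 2 :=
    hκ ▸ div_mul_norm_sq_le_norm_add_smul_sq_add (by positivity) s K
  have hQ : κ * Q ^ 2 ≤ m / (1 + m) * Q ^ 2 := by
    gcongr ?_ * _
    rw [div_le_div_iff₀ (by positivity) (by positivity)]
    nlinarith [sq_nonneg m]
  have hmass : massTerm m K Q = m / (1 + m) * Q ^ 2 + 2 * (b * ‖K‖ ^ 2) := by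
    rw [massTerm, hb]
    field_simp
  rw [bracket, hmass]
  linarith [hmin s, hmin t]

theorem symmWeight_mul_Dker_le_bracket {β : ℝ} (hm : 0 < m) (hβ : |β| ≤ 1) (s t K : R3) {Q : ℝ}
    (hQ : Q ≠ 0) :
    symmWeight β (ellm m s K Q) (ellm m t K Q) * Dker m s t K Q ≤
      √2 / √(m * (m + 2) / (m + 1) ^ 2 * bracket m s t K Q) ^ 3 := by
  have hs : 0 ≤ ellm m s K Q := sqrt_nonneg _
  have ht : 0 ≤ ellm m t K Q := sqrt_nonneg _
  calc symmWeight β (ellm m s K Q) (ellm m t K Q) * Dker m s t K Q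
      ≤ symmWeight β (ellm m s K Q) (ellm m t K Q) * (‖shift m K s‖ * ‖shift m K t‖ /
          (m * (m + 2) / (m + 1) ^ 2 * bracket m s t K Q ^ 2)) :=
        mul_le_mul_of_nonneg_left (Dker_le_norm_mul_norm_div hm s t K hQ)
          (symmWeight_nonneg hs ht β)
    _ ≤ ((ellm m s K Q)⁻¹ + (ellm m t K Q)⁻¹) * (‖shift m K s‖ * ‖shift m K t‖ /
          (m * (m + 2) / (m + 1) ^ 2 * bracket m s t K Q ^ 2)) :=
        mul_le_mul_of_nonneg_right (symmWeight_le_inv_add_inv hs ht hβ) (by positivity)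
    _ ≤ √2 / √(m * (m + 2) / (m + 1) ^ 2 * bracket m s t K Q) ^ 3 := by
        rw [ellm_eq_sqrt_shift hm, ellm_eq_sqrt_shift hm]
        exact inv_sqrt_add_inv_sqrt_mul_div_le (by positivity) (massTerm_pos hm K hQ)
          (norm_nonneg _) (norm_nonneg _)

/-- The constant `√2 (M κ)^{-3/2}` in the bound on the weighted kernel, where
`M = m (m + 2) / (m + 1)²` and `κ = m (m + 2) / (2 + 4 m + m²)` is the factor in
`mul_norm_sq_add_le_bracket`. -/
def kernelConst (m : ℝ) : ℝ :=
  √2 * (m + 1) ^ 3 * √(2 + 4 * m + m ^ 2) ^ 3 / (m * (m + 2)) ^ 3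

theorem symmWeight_mul_Dker_le {β : ℝ} (hm : 0 < m) (hβ : |β| ≤ 1) (s t K : R3) {Q : ℝ}
    (hQ : Q ≠ 0) :
    symmWeight β (ellm m s K Q) (ellm m t K Q) * Dker m s t K Q ≤
      kernelConst m / √(‖s‖ ^ 2 + Q ^ 2 + ‖t‖ ^ 2) ^ 3 := by
  set R := ‖s‖ ^ 2 + Q ^ 2 + ‖t‖ ^ 2
  have hR : 0 < R := by positivity
  set N := 2 + 4 * m + m ^ 2 with hN
  have hsqrt : √(m * (m + 2) / (m + 1) ^ 2 * (m * (m + 2) / N * R)) =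
      m * (m + 2) / ((m + 1) * √N) * √R := by
    rw [show m * (m + 2) / (m + 1) ^ 2 * (m * (m + 2) / N * R) =
      (m * (m + 2) / (m + 1)) ^ 2 * (R / N) by field_simp, sqrt_mul (by positivity),
      sqrt_sq (by positivity), sqrt_div hR.le]
    field_simp
  calc symmWeight β (ellm m s K Q) (ellm m t K Q) * Dker m s t K Q
      ≤ √2 / √(m * (m + 2) / (m + 1) ^ 2 * bracket m s t K Q) ^ 3 :=
        symmWeight_mul_Dker_le_bracket hm hβ s t K hQ
    _ ≤ √2 / √(m * (m + 2) / (m + 1) ^ 2 * (m * (m + 2) / N * R)) ^ 3 := by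
        gcongr
        exact mul_norm_sq_add_le_bracket hm s t K Q
    _ = kernelConst m / √R ^ 3 := by
        rw [hsqrt, kernelConst, ← hN]
        field_simp

theorem Lamb_integrand_le {β : ℝ} (hm : 0 < m) (hβ : |β| ≤ 1) (s t K : R3) {Q : ℝ}
    (hQ : Q ≠ 0) :
    (‖s‖ ^ 2 + Q ^ 2) / (π ^ 2 * (1 + m)) *
        (1 / ‖t‖ ^ 2 * symmWeight β (ellm m s K Q) (ellm m t K Q) * Dker m s t K Q) ≤
      kernelConst m / (π ^ 2 * (1 + m)) *
        ((‖t‖ ^ 2)⁻¹ * ((‖s‖ ^ 2 + Q ^ 2) / √(‖s‖ ^ 2 + Q ^ 2 + ‖t‖ ^ 2) ^ 3)) := by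
  rw [mul_assoc (1 / _)]
  calc _ ≤ (‖s‖ ^ 2 + Q ^ 2) / (π ^ 2 * (1 + m)) *
        (1 / ‖t‖ ^ 2 * (kernelConst m / √(‖s‖ ^ 2 + Q ^ 2 + ‖t‖ ^ 2) ^ 3)) := by
        gcongr
        exact symmWeight_mul_Dker_le hm hβ s t K hQ
    _ = _ := by ring

theorem kernelConst_div_mul_four_pi (hm : 0 ≤ m) :
    kernelConst m / (π ^ 2 * (1 + m)) * (4 * π) =
      4 * √2 * (1 + m) ^ 2 * (2 + 4 * m + m ^ 2) ^ ((3 : ℝ) / 2) / (π * (m * (m + 2)) ^ 3) := by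
  rw [rpow_div_two_eq_sqrt _ (by positivity), rpow_ofNat, kernelConst]
  field_simp
  ring

end Kernel

theorem Lamb_upper_bound_small_beta_general (m β : ℝ) (hm : 0 < m) (hβ : |β| ≤ 1) :
    Lamb m β ≤ ENNReal.ofReal (4 * Real.sqrt 2 * (1 + m) ^ 2
      * (2 + 4 * m + m ^ 2) ^ ((3 : ℝ) / 2) / (π * (m * (m + 2)) ^ 3)) := by
  refine iSup_le fun s => iSup_le fun K => iSup_le fun Q => iSup_le fun hQ => ?_
  have hc : 0 < ‖s‖ ^ 2 + Q ^ 2 := by positivity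
  have hB : 0 ≤ kernelConst m / (π ^ 2 * (1 + m)) := by unfold kernelConst; positivity
  rw [← lintegral_const_mul' _ _ ENNReal.ofReal_ne_top]
  calc _ ≤ ∫⁻ t : R3, ENNReal.ofReal (kernelConst m / (π ^ 2 * (1 + m))) * ENNReal.ofReal
        ((‖t‖ ^ 2)⁻¹ * ((‖s‖ ^ 2 + Q ^ 2) / √(‖s‖ ^ 2 + Q ^ 2 + ‖t‖ ^ 2) ^ 3)) := by
        refine lintegral_mono fun t => ?_
        rw [← ENNReal.ofReal_mul (by positivity), ← ENNReal.ofReal_mul hB]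
        exact ENNReal.ofReal_le_ofReal (Lamb_integrand_le hm hβ s t K hQ.ne')
    _ = ENNReal.ofReal (kernelConst m / (π ^ 2 * (1 + m)) * (4 * π)) := by
        rw [lintegral_const_mul' _ _ ENNReal.ofReal_ne_top,
          lintegral_inv_norm_sq_mul_div_sqrt_add_norm_sq_pow_three hc, ← ENNReal.ofReal_mul hB]
    _ = _ := by rw [kernelConst_div_mul_four_pi hm.le]

/-- for `m > 0` and `0 ≤ β ≤ 1`,
`Λ_β(m) ≤ 4√2 (1+m)² (2+4m+m²)^{3/2} / (π (m(m+2))³)`. -/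
theorem Lamb_upper_bound_small_beta (m β : ℝ) (hm : 0 < m) (hβ₀ : 0 ≤ β) (hβ₁ : β ≤ 1) :
    Lamb m β ≤ ENNReal.ofReal (4 * Real.sqrt 2 * (1 + m) ^ 2
      * (2 + 4 * m + m ^ 2) ^ ((3 : ℝ) / 2) / (π * (m * (m + 2)) ^ 3)) :=
  Lamb_upper_bound_small_beta_general m β hm (abs_le.2 ⟨by linarith, hβ₁⟩)
end
end

section
/- For every m>0, the supremum defining Λ(m) is unchanged if it is restricted to configurations where K is an antiparallel multiple of s: Λ(m) = sup over s∈ℝ³, 0≤b≤2+m, Q>0 of ((|s|²+Q²)/(π²(1+m))) ℓ_m(s,−bs,Q)^{−1/2} ∫_{ℝ³} |t|^{−2} ℓ_m(t,−bs,Q)^{−1/2} D(s,t,−bs,Q) dt. -/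
open MeasureTheory Real Filter Topology
open scoped InnerProductSpace ENNReal

noncomputable section

/-!
In the shifted variables `u = s + A K`, `v = t + A K`, with `A = 1 / (2 + m)`, the factor `ℓ_m` is
radial and depends on `K` only through `‖K‖`, so the integrand becomes a function of `‖v‖` and
`|⟪u, v⟫|`, increasing in the latter, times `‖v - A K‖⁻²`. Fix `u`, `Q` and `‖K‖`. The first factor
is even in `v`, so only the even part of the second one matters, and by convexity of the inverse
that part increases with `|⟪K, v⟫|` on spheres. If `K` is parallel to `u`, the two factors are
therefore ordered in the same way, and a rearrangement along the reflection exchanging two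
directions shows that this choice maximises the integral. Among the two parallel choices, the
antiparallel one also maximises `‖s‖ = ‖u - A K‖`, hence the prefactor.
-/

section Rearrangement

/-- In a canonically ordered semiring no cancellation is available, so the binary rearrangement
inequality of ordered rings does not apply. -/
lemma mul_add_mul_le_mul_add_mul_of_canonicallyOrderedAdd {R : Type*} [Semiring R] [PartialOrder R]
    [CanonicallyOrderedAdd R] {a b c d : R} (hab : a ≤ b) (hcd : c ≤ d) :
    a * d + b * c ≤ a * c + b * d := by
  obtain ⟨p, rfl⟩ := le_iff_exists_add.1 hab
  obtain ⟨q, rfl⟩ := le_iff_exists_add.1 hcd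
  refine le_iff_exists_add.2 ⟨p * q, ?_⟩
  simp only [mul_add, add_mul]
  abel

lemma mul_add_mul_le_of_monovaryOn_pair {ι R : Type*} [Semiring R] [LinearOrder R]
    [CanonicallyOrderedAdd R] {f g : ι → R} {i j : ι} (h : MonovaryOn f g {i, j}) :
    f i * g j + f j * g i ≤ f i * g i + f j * g j := by
  have hi : i ∈ ({i, j} : Set ι) := Set.mem_insert _ _
  have hj : j ∈ ({i, j} : Set ι) := Set.mem_insert_of_mem _ rfl
  rcases lt_trichotomy (g i) (g j) with hg | hg | hg
  · exact mul_add_mul_le_mul_add_mul_of_canonicallyOrderedAdd (h hi hj hg) hg.le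
  · rw [hg]
  · rw [add_comm, add_comm (f i * g i)]
    exact mul_add_mul_le_mul_add_mul_of_canonicallyOrderedAdd (h hj hi hg) hg.le

variable {α : Type*} [MeasurableSpace α] {μ : Measure α}

theorem lintegral_mul_comp_le_of_monovaryOn {R : α → α} (hR : R.Involutive)
    (hRμ : MeasurePreserving R μ μ) {f g : α → ℝ≥0∞} (hf : AEMeasurable f μ)
    (hg : AEMeasurable g μ) (h : ∀ᵐ x ∂μ, MonovaryOn f g {x, R x}) :
    ∫⁻ x, f x * g (R x) ∂μ ≤ ∫⁻ x, f x * g x ∂μ := by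
  have lintegral_comp_R (F : α → ℝ≥0∞) : ∫⁻ x, F (R x) ∂μ = ∫⁻ x, F x ∂μ :=
    hRμ.lintegral_comp_emb
      (MeasurableEquiv.ofInvolutive R hR hRμ.measurable).measurableEmbedding F
  have hswap : ∫⁻ x, f (R x) * g x ∂μ = ∫⁻ x, f x * g (R x) ∂μ := by
    simpa only [hR _] using lintegral_comp_R fun x => f x * g (R x)
  have hfgR : AEMeasurable (fun x => f x * g (R x)) μ :=
    hf.mul (hg.comp_quasiMeasurePreserving hRμ.quasiMeasurePreserving)
  have hfg : AEMeasurable (fun x => f x * g x) μ := hf.mul hg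
  have htwo : 2 * ∫⁻ x, f x * g (R x) ∂μ ≤ 2 * ∫⁻ x, f x * g x ∂μ :=
    calc 2 * ∫⁻ x, f x * g (R x) ∂μ
        = ∫⁻ x, (f x * g (R x) + f (R x) * g x) ∂μ := by
          rw [lintegral_add_left' hfgR, hswap, two_mul]
      _ ≤ ∫⁻ x, (f x * g x + f (R x) * g (R x)) ∂μ :=
          lintegral_mono_ae (h.mono fun _ => mul_add_mul_le_of_monovaryOn_pair)
      _ = 2 * ∫⁻ x, f x * g x ∂μ := by
          rw [lintegral_add_left' hfg, lintegral_comp_R fun x => f x * g x, two_mul]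
  exact (ENNReal.mul_le_mul_iff_right two_ne_zero ENNReal.ofNat_ne_top).1 htwo

variable [InvolutiveNeg α] [MeasurableNeg α] [μ.IsNegInvariant]

lemma lintegral_mul_add_comp_neg_of_even {f g : α → ℝ≥0∞} (hf : AEMeasurable f μ)
    (hg : AEMeasurable g μ) (hf_even : f.Even) :
    ∫⁻ x, f x * (g x + g (-x)) ∂μ = 2 * ∫⁻ x, f x * g x ∂μ := by
  have hneg : ∫⁻ x, f x * g (-x) ∂μ = ∫⁻ x, f x * g x ∂μ := by
    simpa only [hf_even _] using lintegral_neg_eq_self (μ := μ) fun x => f x * g x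
  have hfg : AEMeasurable (fun x => f x * g x) μ := hf.mul hg
  simp_rw [mul_add]
  rw [lintegral_add_left' hfg, hneg, two_mul]

theorem lintegral_mul_comp_le_of_even {R : α → α} (hR : R.Involutive) (hR_odd : R.Odd)
    (hRμ : MeasurePreserving R μ μ) {f g : α → ℝ≥0∞} (hf : AEMeasurable f μ)
    (hg : AEMeasurable g μ) (hf_even : f.Even)
    (h : ∀ᵐ x ∂μ, MonovaryOn f (fun y => g y + g (-y)) {x, R x}) :
    ∫⁻ x, f x * g (R x) ∂μ ≤ ∫⁻ x, f x * g x ∂μ := by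
  have hgR : AEMeasurable (fun x => g (R x)) μ :=
    hg.comp_quasiMeasurePreserving hRμ.quasiMeasurePreserving
  have hg_neg : AEMeasurable (fun x => g (-x)) μ :=
    hg.comp_quasiMeasurePreserving (Measure.measurePreserving_neg μ).quasiMeasurePreserving
  have key := lintegral_mul_comp_le_of_monovaryOn hR hRμ hf (hg.add hg_neg) h
  have hsymm := lintegral_mul_add_comp_neg_of_even hf hgR hf_even
  simp only [hR_odd _] at hsymm
  simp only [Pi.add_apply, hsymm, lintegral_mul_add_comp_neg_of_even hf hg hf_even] at key
  exact (ENNReal.mul_le_mul_iff_right two_ne_zero ENNReal.ofNat_ne_top).1 key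

end Rearrangement

lemma map_sub_smul_add_map_add_smul_le_of_convexOn {E : Type*} [AddCommGroup E] [Module ℝ E]
    {s : Set E} {φ : E → ℝ} (hφ : ConvexOn ℝ s φ) {x z : E} (hsub : x - z ∈ s)
    (hadd : x + z ∈ s) {c : ℝ} (hc : |c| ≤ 1) :
    φ (x - c • z) + φ (x + c • z) ≤ φ (x - z) + φ (x + z) := by
  obtain ⟨hc₁, hc₂⟩ := abs_le.1 hc
  have h₁ := hφ.2 hsub hadd (by linarith : 0 ≤ (1 + c) / 2)
    (by linarith : 0 ≤ (1 - c) / 2) (by ring)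
  have h₂ := hφ.2 hsub hadd (by linarith : 0 ≤ (1 - c) / 2)
    (by linarith : 0 ≤ (1 + c) / 2) (by ring)
  rw [show ((1 + c) / 2) • (x - z) + ((1 - c) / 2) • (x + z) = x - c • z by module] at h₁
  rw [show ((1 - c) / 2) • (x - z) + ((1 + c) / 2) • (x + z) = x + c • z by module] at h₂
  simp only [smul_eq_mul] at h₁ h₂
  linarith

section AxiallyMonotoneOn

variable {E β γ : Type*} [NormedAddCommGroup E] [InnerProductSpace ℝ E] [Preorder γ]

/-- `f` is axially monotone on `s` if on each sphere centred at the origin its values at points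
of `s` increase with the angular distance to the hyperplane orthogonal to the axis `u`. This is the
ordering shared by the two factors of the integrand. -/
def AxiallyMonotoneOn [LE β] (u : E) (f : E → β) (s : Set E) : Prop :=
  ∀ ⦃v⦄, v ∈ s → ∀ ⦃w⦄, w ∈ s → ‖v‖ = ‖w‖ → |⟪u, v⟫_ℝ| ≤ |⟪u, w⟫_ℝ| → f v ≤ f w

namespace AxiallyMonotoneOn

lemma mono [LE β] {u : E} {f : E → β} {s t : Set E} (hf : AxiallyMonotoneOn u f t) (hst : s ⊆ t) :
    AxiallyMonotoneOn u f s :=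
  fun _ hv _ hw => hf (hst hv) (hst hw)

lemma monotone_comp [Preorder β] {u : E} {f : E → β} {s : Set E} {φ : β → γ} (hφ : Monotone φ)
    (hf : AxiallyMonotoneOn u f s) : AxiallyMonotoneOn u (fun v => φ (f v)) s :=
  fun _ hv _ hw hvw h => hφ (hf hv hw hvw h)

lemma of_smul [LE β] {u : E} {c : ℝ} {f : E → β} {s : Set E} (hf : AxiallyMonotoneOn (c • u) f s) :
    AxiallyMonotoneOn u f s := by
  intro v hv w hw hvw h
  refine hf hv hw hvw ?_
  simp only [real_inner_smul_left, abs_mul]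
  gcongr

lemma even [PartialOrder β] {u : E} {f : E → β} (hf : AxiallyMonotoneOn u f Set.univ) :
    f.Even := fun v =>
  le_antisymm
    (hf trivial trivial (norm_neg v) (by rw [inner_neg_right, abs_neg]))
    (hf trivial trivial (norm_neg v).symm (by rw [inner_neg_right, abs_neg]))

lemma monovaryOn [Preorder β] {u : E} {f : E → β} {g : E → γ} {s : Set E}
    (hf : AxiallyMonotoneOn u f s) (hg : AxiallyMonotoneOn u g s) (r : ℝ) :
    MonovaryOn f g (s ∩ Metric.sphere 0 r) := by
  rintro v ⟨hv, hvr⟩ w ⟨hw, hwr⟩ hlt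
  rw [mem_sphere_zero_iff_norm] at hvr hwr
  refine hf hv hw (hvr.trans hwr.symm) (le_of_not_ge fun h => ?_)
  exact hlt.not_ge (hg hw hv (hwr.trans hvr.symm) h)

end AxiallyMonotoneOn

/-- The points `±b` are excluded because `φ` is evaluated at `0` there: for `φ x = x⁻¹` this is the
junk value `0⁻¹ = 0` rather than `∞`. -/
theorem axiallyMonotoneOn_map_sq_dist_add_of_convexOn {φ : ℝ → ℝ}
    (hφ : ConvexOn ℝ (Set.Ioi 0) φ) (b : E) :
    AxiallyMonotoneOn b (fun v => φ (‖v - b‖ ^ 2) + φ (‖-v - b‖ ^ 2)) {b, -b}ᶜ := by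
  intro v _ w hw hvw h
  obtain ⟨hwb, hwb'⟩ : w ≠ b ∧ w ≠ -b := by simpa [not_or] using hw
  have hsub (x : E) : ‖x - b‖ ^ 2 = ‖x‖ ^ 2 + ‖b‖ ^ 2 - 2 * ⟪b, x⟫_ℝ := by
    rw [norm_sub_sq_real, real_inner_comm]; ring
  have hadd (x : E) : ‖-x - b‖ ^ 2 = ‖x‖ ^ 2 + ‖b‖ ^ 2 + 2 * ⟪b, x⟫_ℝ := by
    rw [hsub, norm_neg, inner_neg_right]; ring
  have hpos {x : E} (hx : x ≠ b) : 0 < ‖x - b‖ ^ 2 := by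
    have := norm_sub_pos_iff.2 hx
    positivity
  have hc : |⟪b, v⟫_ℝ / ⟪b, w⟫_ℝ| ≤ 1 := by
    rw [abs_div]
    exact div_le_one_of_le₀ h (abs_nonneg _)
  have hcw : ⟪b, v⟫_ℝ / ⟪b, w⟫_ℝ * (2 * ⟪b, w⟫_ℝ) = 2 * ⟪b, v⟫_ℝ := by
    rw [mul_left_comm, div_mul_cancel_of_imp]
    intro hw₀
    rwa [hw₀, abs_zero, abs_nonpos_iff] at h
  have key := map_sub_smul_add_map_add_smul_le_of_convexOn hφ
    (hsub w ▸ hpos hwb) (hadd w ▸ hpos (neg_eq_iff_eq_neg.not.2 hwb')) hc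
  rw [smul_eq_mul, hcw, ← hsub, ← hadd, ← hvw, ← hsub, ← hadd] at key
  simpa only [hsub, hadd, hvw] using key

theorem lintegral_mul_map_sq_dist_le_of_axiallyMonotoneOn [FiniteDimensional ℝ E]
    [MeasurableSpace E] [BorelSpace E] {φ : ℝ → ℝ} (hφ : ConvexOn ℝ (Set.Ioi 0) φ)
    (hφ₀ : ∀ x, 0 ≤ x → 0 ≤ φ x) (hφ_meas : Measurable φ) {f : E → ℝ≥0∞}
    (hf_meas : AEMeasurable f) {a u : E} (hf : AxiallyMonotoneOn u f Set.univ) {c : ℝ}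
    (hac : ‖a‖ = ‖c • u‖) :
    ∫⁻ v, f v * ENNReal.ofReal (φ (‖v - a‖ ^ 2)) ≤
      ∫⁻ v, f v * ENNReal.ofReal (φ (‖v - c • u‖ ^ 2)) := by
  rcases subsingleton_or_nontrivial E with _ | _
  · rw [Subsingleton.elim a (c • u)]
  set b := c • u
  let R : E ≃ₗᵢ[ℝ] E := (ℝ ∙ (a - b))ᗮ.reflection
  have R_involutive : Function.Involutive R := Submodule.reflection_involutive _
  have hdist (v : E) : ‖R v - b‖ = ‖v - a‖ := by
    rw [← show R a = b from Submodule.reflection_sub hac, ← map_sub, R.norm_map]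
  let g (v : E) : ℝ≥0∞ := ENNReal.ofReal (φ (‖v - b‖ ^ 2))
  have hg : AxiallyMonotoneOn b (fun v => g v + g (-v)) {b, -b}ᶜ := by
    simpa only [g, ENNReal.ofReal_add (hφ₀ _ (sq_nonneg _)) (hφ₀ _ (sq_nonneg _))] using
      (axiallyMonotoneOn_map_sq_dist_add_of_convexOn hφ b).monotone_comp ENNReal.ofReal_mono
  have hmem : ∀ᵐ v : E, v ∈ ({b, -b}ᶜ : Set E) :=
    compl_mem_ae_iff.2 ((Set.toFinite {b, -b}).measure_zero volume)
  have hmonovary : ∀ᵐ v : E, MonovaryOn f (fun v => g v + g (-v)) {v, R v} := by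
    filter_upwards [hmem, R.measurePreserving.quasiMeasurePreserving.ae hmem] with v hv hRv
    refine ((hf.mono (Set.subset_univ _)).monovaryOn hg.of_smul ‖v‖).subset ?_
    rintro w (rfl | rfl)
    · exact ⟨hv, by simp⟩
    · exact ⟨hRv, by simp⟩
  have key := lintegral_mul_comp_le_of_even R_involutive (map_neg R) R.measurePreserving hf_meas
    (by fun_prop : Measurable g).aemeasurable hf.even hmonovary
  simpa only [g, hdist] using key

end AxiallyMonotoneOn

/-- The antiparallel configuration with shifted variable `u` and `‖K‖ = k` is
`s = (1 + A r) u`, `K = -r u`, where `r = k / ‖u‖`. -/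
lemma exists_antiparallel_add_smul_eq {E : Type*} [NormedAddCommGroup E] [NormedSpace ℝ E]
    {A k : ℝ} (hA : 0 < A) (hk : 0 ≤ k) {u : E} (hu : u ≠ 0) :
    ∃ (s : E) (b c : ℝ), 0 ≤ b ∧ b ≤ A⁻¹ ∧ s + A • (-b • s) = u ∧ -b • s = c • u ∧
      ‖-b • s‖ = k ∧ ‖s‖ = ‖u‖ + A * k := by
  have hu' : 0 < ‖u‖ := norm_pos_iff.2 hu
  obtain ⟨r, hr, rfl⟩ : ∃ r, 0 ≤ r ∧ r * ‖u‖ = k :=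
    ⟨k / ‖u‖, by positivity, div_mul_cancel₀ _ hu'.ne'⟩
  have hpos : 0 < 1 + A * r := by positivity
  have hK : -(r / (1 + A * r)) • (1 + A * r) • u = -r • u := by
    rw [smul_smul, neg_mul, div_mul_cancel₀ _ hpos.ne']
  refine ⟨(1 + A * r) • u, r / (1 + A * r), -r, by positivity, ?_, ?_, hK, ?_, ?_⟩
  · rw [div_le_iff₀ hpos, mul_add, inv_mul_cancel_left₀ hA.ne', mul_one]
    linarith [inv_pos.2 hA]
  · rw [hK]
    module
  · rw [hK, neg_smul, norm_neg, norm_smul, Real.norm_of_nonneg hr]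
  · rw [norm_smul, Real.norm_of_nonneg hpos.le]
    ring

section ShiftedKernel

variable {E : Type*} [NormedAddCommGroup E] [InnerProductSpace ℝ E] {m μ : ℝ}

/-- The factor `D / √ℓ_m` of the integrand in the shifted variables `u = s + A K`, `v = t + A K`.
For fixed `u` and `v` it depends on `K` and `Q` only through `μ`, see `shiftedMass`. -/
def shiftedKernel (m μ : ℝ) (u v : E) : ℝ :=
  |⟪u, v⟫_ℝ| / ((‖u‖ ^ 2 + ‖v‖ ^ 2 + μ) ^ 2 - (2 / (1 + m) * ⟪u, v⟫_ℝ) ^ 2) /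
    √√(m * (m + 2) / (m + 1) ^ 2 * ‖v‖ ^ 2 + μ)

lemma abs_two_div_one_add_mul_inner_le (hm : 0 ≤ m) (u v : E) :
    |2 / (1 + m) * ⟪u, v⟫_ℝ| ≤ ‖u‖ ^ 2 + ‖v‖ ^ 2 :=
  calc |2 / (1 + m) * ⟪u, v⟫_ℝ| = 2 / (1 + m) * |⟪u, v⟫_ℝ| := by
        rw [abs_mul, abs_of_nonneg (by positivity)]
    _ ≤ 2 * (‖u‖ * ‖v‖) := by
        gcongr
        · exact div_le_self zero_le_two (by linarith)
        · exact abs_real_inner_le_norm u v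
    _ ≤ ‖u‖ ^ 2 + ‖v‖ ^ 2 := by linarith [two_mul_le_add_sq ‖u‖ ‖v‖]

lemma shiftedKernel_nonneg (hm : 0 ≤ m) (hμ : 0 ≤ μ) (u v : E) : 0 ≤ shiftedKernel m μ u v := by
  have hden : 0 ≤ (‖u‖ ^ 2 + ‖v‖ ^ 2 + μ) ^ 2 - (2 / (1 + m) * ⟪u, v⟫_ℝ) ^ 2 :=
    sub_nonneg.2 (sq_le_sq.2 ((le_add_of_le_of_nonneg (abs_two_div_one_add_mul_inner_le hm u v)
      hμ).trans (le_abs_self _)))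
  unfold shiftedKernel
  positivity

@[fun_prop]
lemma measurable_shiftedKernel [MeasurableSpace E] [BorelSpace E] (m μ : ℝ) (u : E) :
    Measurable (shiftedKernel m μ u) := by
  unfold shiftedKernel
  fun_prop

theorem axiallyMonotoneOn_shiftedKernel (hm : 0 ≤ m) (hμ : 0 < μ) (u : E) :
    AxiallyMonotoneOn u (shiftedKernel m μ u) Set.univ := by
  intro v _ w _ hvw h
  have hden : 0 < (‖u‖ ^ 2 + ‖w‖ ^ 2 + μ) ^ 2 - (2 / (1 + m) * ⟪u, w⟫_ℝ) ^ 2 :=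
    sub_pos.2 (sq_lt_sq.2 ((lt_add_of_le_of_pos (abs_two_div_one_add_mul_inner_le hm u w)
      hμ).trans_le (le_abs_self _)))
  unfold shiftedKernel
  rw [hvw]
  gcongr ?_ / _
  refine div_le_div₀ (abs_nonneg _) h hden (sub_le_sub_left (sq_le_sq.2 ?_) _)
  rw [abs_mul, abs_mul]
  gcongr

end ShiftedKernel

section ShiftedVariables

variable {m : ℝ}

/-- The `v`-independent term `μ` common to `D` and `ℓ_m` in the shifted variables. -/
def shiftedMass (m : ℝ) (K : R3) (Q : ℝ) : ℝ :=
  m / (1 + m) * (Q ^ 2 + (2 + m)⁻¹ * ‖K‖ ^ 2)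

lemma shiftedMass_nonneg (hm : 0 ≤ m) (K : R3) (Q : ℝ) : 0 ≤ shiftedMass m K Q := by
  unfold shiftedMass
  positivity

lemma shiftedMass_pos (hm : 0 < m) (K : R3) {Q : ℝ} (hQ : 0 < Q) : 0 < shiftedMass m K Q := by
  unfold shiftedMass
  positivity

lemma ellm_eq_sqrt_shifted (hm : 0 ≤ m) (s K : R3) (Q : ℝ) :
    ellm m s K Q =
      √(m * (m + 2) / (m + 1) ^ 2 * ‖s + (2 + m)⁻¹ • K‖ ^ 2 + shiftedMass m K Q) := by
  rw [ellm, shiftedMass, norm_add_sq_real, norm_add_sq_real, norm_smul, inner_smul_right, mul_pow,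
    Real.norm_eq_abs, sq_abs]
  congr 1
  field_simp
  ring

lemma lintegral_dker_eq_lintegral_shiftedKernel (hm : 0 ≤ m) (s K : R3) (Q : ℝ) :
    ∫⁻ t : R3, ENNReal.ofReal (Dker m s t K Q / (‖t‖ ^ 2 * √(ellm m t K Q))) =
      ∫⁻ v : R3, ENNReal.ofReal (shiftedKernel m (shiftedMass m K Q) (s + (2 + m)⁻¹ • K) v) *
        ENNReal.ofReal (‖v - (2 + m)⁻¹ • K‖ ^ 2)⁻¹ := by
  rw [← lintegral_sub_right_eq_self _ ((2 + m)⁻¹ • K)]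
  refine lintegral_congr fun v => ?_
  rw [← ENNReal.ofReal_mul (shiftedKernel_nonneg hm (shiftedMass_nonneg hm K Q) _ v),
    ellm_eq_sqrt_shifted hm, Dker, shiftedKernel, sub_add_cancel, shiftedMass,
    mul_comm (‖_‖ ^ 2), ← div_div, div_eq_mul_inv _ (‖_‖ ^ 2)]

/-- The quantity whose supremum over all configurations is `Λ(m)`. -/
def lamTerm (m : ℝ) (s K : R3) (Q : ℝ) : ℝ≥0∞ :=
  ENNReal.ofReal ((‖s‖ ^ 2 + Q ^ 2) / (π ^ 2 * (1 + m)) / √(ellm m s K Q)) *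
    ∫⁻ t : R3, ENNReal.ofReal (Dker m s t K Q / (‖t‖ ^ 2 * √(ellm m t K Q)))

lemma lamTerm_eq_zero_of_add_smul_eq_zero (hm : 0 ≤ m) {s K : R3} (h : s + (2 + m)⁻¹ • K = 0)
    (Q : ℝ) : lamTerm m s K Q = 0 := by
  rw [lamTerm, lintegral_dker_eq_lintegral_shiftedKernel hm, h]
  simp [shiftedKernel]

theorem lamTerm_le_of_shift_eq (hm : 0 < m) {s K s' K' : R3} {Q : ℝ} (hQ : 0 < Q)
    (hshift : s + (2 + m)⁻¹ • K = s' + (2 + m)⁻¹ • K') {c : ℝ}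
    (hparallel : K' = c • (s' + (2 + m)⁻¹ • K')) (hK : ‖K‖ = ‖K'‖) (hs : ‖s‖ ≤ ‖s'‖) :
    lamTerm m s K Q ≤ lamTerm m s' K' Q := by
  have hmass : shiftedMass m K Q = shiftedMass m K' Q := by rw [shiftedMass, shiftedMass, hK]
  have hell : ellm m s K Q = ellm m s' K' Q := by
    rw [ellm_eq_sqrt_shifted hm.le, ellm_eq_sqrt_shifted hm.le, hshift, hmass]
  rw [lamTerm, lamTerm, hell, lintegral_dker_eq_lintegral_shiftedKernel hm.le,
    lintegral_dker_eq_lintegral_shiftedKernel hm.le, hshift, hmass]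
  set u := s' + (2 + m)⁻¹ • K'
  have hAK' : (2 + m)⁻¹ • K' = ((2 + m)⁻¹ * c) • u := by rw [mul_smul, ← hparallel]
  have hnorm : ‖(2 + m)⁻¹ • K‖ = ‖((2 + m)⁻¹ * c) • u‖ := by
    rw [← hAK', norm_smul, norm_smul, hK]
  have hkernel : AxiallyMonotoneOn u
      (fun v => ENNReal.ofReal (shiftedKernel m (shiftedMass m K' Q) u v)) Set.univ :=
    (axiallyMonotoneOn_shiftedKernel hm.le (shiftedMass_pos hm K' hQ) u).monotone_comp
      ENNReal.ofReal_mono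
  rw [hAK']
  gcongr ENNReal.ofReal ?_ * ?_
  · gcongr
  · refine lintegral_mul_map_sq_dist_le_of_axiallyMonotoneOn (φ := fun x => x⁻¹) ?_
      (fun _ => inv_nonneg.2) measurable_inv (by fun_prop) hkernel hnorm
    simpa only [zpow_neg_one] using convexOn_zpow (-1)

theorem exists_antiparallel_lamTerm_le (hm : 0 < m) (s K : R3) {Q : ℝ} (hQ : 0 < Q) :
    ∃ (s' : R3) (b : ℝ), 0 ≤ b ∧ b ≤ 2 + m ∧ lamTerm m s K Q ≤ lamTerm m s' (-b • s') Q := by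
  have hA : 0 < (2 + m)⁻¹ := by positivity
  set u := s + (2 + m)⁻¹ • K with hu_def
  rcases eq_or_ne u 0 with hu | hu
  · refine ⟨0, 0, le_rfl, by linarith, ?_⟩
    rw [lamTerm_eq_zero_of_add_smul_eq_zero hm.le hu]
    exact zero_le
  obtain ⟨s', b, c, hb₀, hb, hshift, hparallel, hK, hs'⟩ :=
    exists_antiparallel_add_smul_eq hA (norm_nonneg K) hu
  have hs : ‖s‖ ≤ ‖s'‖ :=
    calc ‖s‖ = ‖u - (2 + m)⁻¹ • K‖ := by rw [hu_def, add_sub_cancel_right]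
      _ ≤ ‖u‖ + ‖(2 + m)⁻¹ • K‖ := norm_sub_le _ _
      _ = ‖s'‖ := by rw [hs', norm_smul, Real.norm_of_nonneg hA.le]
  exact ⟨s', b, hb₀, inv_inv (2 + m) ▸ hb,
    lamTerm_le_of_shift_eq hm hQ hshift.symm (hshift.symm ▸ hparallel) hK.symm hs⟩

end ShiftedVariables

/-- the supremum defining `Λ(m)` is unchanged when restricted to
configurations with `K = -b·s`, `0 ≤ b ≤ 2+m`. -/
theorem Lam_eq_sup_antiparallel (m : ℝ) (hm : 0 < m) :
    Lam m = ⨆ (s : R3) (b : ℝ) (_ : 0 ≤ b) (_ : b ≤ 2 + m) (Q : ℝ) (_ : 0 < Q),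
      ENNReal.ofReal ((‖s‖ ^ 2 + Q ^ 2) / (π ^ 2 * (1 + m))
          / Real.sqrt (ellm m s (-b • s) Q)) *
        ∫⁻ t : R3, ENNReal.ofReal
          (Dker m s t (-b • s) Q / (‖t‖ ^ 2 * Real.sqrt (ellm m t (-b • s) Q))) := by
  refine le_antisymm (iSup₂_le fun s K => iSup₂_le fun Q hQ => ?_)
    (iSup₂_le fun s b => iSup₂_le fun _ _ => iSup₂_le fun Q hQ => ?_)
  · obtain ⟨s', b, hb₀, hb, hle⟩ := exists_antiparallel_lamTerm_le hm s K hQ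
    exact le_iSup₂_of_le s' b <| le_iSup₂_of_le hb₀ hb <| le_iSup₂_of_le Q hQ hle
  · exact le_iSup₂_of_le s (-b • s) <| le_iSup₂_of_le Q hQ le_rfl
end
end
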